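/- arXiv:cs/0701070 — 4 statements merged into one kernel-verified Lean document; each statement's English description precedes it below -/
import Mathlib

section
/- Let (σ_1,…,σ_w, S_0,…,S_{n−1}) ∈ V(I_{N,w}) ⊆ K^{w+n}, and define e = (e_0,…,e_{n−1}) ∈ K^n by the inverse Fourier transform e_j = Σ_{i=0}^{n−1} S_i α^{−ij} (note that n·1 = 1 in K since n is odd and K has characteristic 2). Then every coordinate e_j lies in the prime subfield F_2 ⊆ K, and the number of nonzero coordinates of e is at most w. -/
/-!
Put `σ(X) = 1 + σ₁X + ⋯ + σ_w X^w` and let `S` be extended `n`-periodically.  The Newton identities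
with index `i ≤ w` and `i > w` together say `σ(X) · ∑_{i ≥ 1} S_i X^i = X σ'(X)` as power series,
and those with `w < i ≤ n + w` say, by periodicity, that `∑_k σ_k S_{i-k} = 0` for every `i` in
`ZMod n`.

*Binary coordinates.*  The series `F = ∑_{i ≥ 1} S_i X^i` is the logarithmic derivative of `σ` for
the derivation `D = X d/dX`.  In characteristic 2 one has `D ∘ D = D`, so applying `D` to
`σ F = D σ` and cancelling `σ` gives the Riccati equation `F² + D F = F`.  Its coefficient of
`X^(2i)` reads `S_i² = S_{2i}` (`newton_sq`).  Since `i ↦ 2i` permutes `ZMod n` for odd `n`, squaring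
`e_j = ∑ S_i α^(-ij)` only permutes the summands, whence `e_j² = e_j`.

*Weight.*  Multiplying `e_j` by `σ(α^(-j))` and reindexing turns it into
`∑_i α^(-ij) ∑_k σ_k S_{i-k} = 0`.  So each `j` with `e_j ≠ 0` gives a root `α^(-j)` of `σ`, a
nonzero polynomial of degree at most `w`, and these roots are distinct.
-/

open MvPolynomial

noncomputable section

abbrev F2 : Type := ZMod 2

/-- `K` is an algebraic closure of `F₂`. -/
abbrev K : Type := AlgebraicClosure F2

/-- The variable `S_i` (index read modulo `n`) of the polynomial ring
`R = F₂[σ₁,…,σ_w, S₀,…,S_{n−1}]`, whose variables are indexed by `Fin w ⊕ ZMod n`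
(`Sum.inl i` is `σ_{i+1}`, `Sum.inr i` is `S_i`). -/
def Sv (n w : ℕ) (i : ℕ) : MvPolynomial (Fin w ⊕ ZMod n) F2 :=
  X (Sum.inr (i : ZMod n))

/-- The variable `σ_j` for `1 ≤ j ≤ w`, and `0` otherwise. -/
def sigv (n w : ℕ) (j : ℕ) : MvPolynomial (Fin w ⊕ ZMod n) F2 :=
  if h : 1 ≤ j ∧ j ≤ w then X (Sum.inl ⟨j - 1, by omega⟩) else 0

/-- The `i`-th Newton identity polynomial:
`S_i + ∑_{j=1}^{i−1} σ_j S_{i−j} + i·σ_i` for `i ≤ w`, and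
`S_i + ∑_{j=1}^{w} σ_j S_{i−j}` for `i > w` (indices of the `S` variables read modulo `n`;
over `F₂`, `+` and `−` coincide and `i·σ_i` is `σ_i` for odd `i` and `0` for even `i`). -/
def newtonPoly (n w : ℕ) (i : ℕ) : MvPolynomial (Fin w ⊕ ZMod n) F2 :=
  if i ≤ w then
    Sv n w i + (∑ j ∈ Finset.Ico 1 i, sigv n w j * Sv n w (i - j))
      + (i : MvPolynomial (Fin w ⊕ ZMod n) F2) * sigv n w i
  else
    Sv n w i + ∑ j ∈ Finset.Icc 1 w, sigv n w j * Sv n w (i - j)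

/-- The Newton ideal `I_{N,w}`, generated by the Newton identity polynomials
for `1 ≤ i ≤ n + w`. -/
def newtonIdeal (n w : ℕ) : Ideal (MvPolynomial (Fin w ⊕ ZMod n) F2) :=
  Ideal.span (newtonPoly n w '' Set.Icc 1 (n + w))

/-- The Fourier transform of a word `e ∈ Kⁿ`: `S_i(e) = ∑_j e_j α^(i·j)`. -/
def ft {n : ℕ} [NeZero n] (α : K) (e : ZMod n → K) (i : ZMod n) : K :=
  ∑ j : ZMod n, e j * α ^ (i.val * j.val)

/-- A word is binary if all its coordinates lie in the prime subfield `F₂ ⊆ K`,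
i.e. each coordinate is `0` or `1`. -/
def isBinary {n : ℕ} (e : ZMod n → K) : Prop := ∀ j, e j = 0 ∨ e j = 1

/-- The (Hamming) weight of a word: the number of its nonzero coordinates. -/
def wt {n : ℕ} (e : ZMod n → K) : ℕ := Set.ncard {j | e j ≠ 0}

end

/-- In characteristic 2, the `2i`-th coefficient of a square of a power series is the square of the
`i`-th coefficient. -/
lemma coeff_two_mul_sq {F : Type*} [Field F] [CharP F 2] (f : PowerSeries F) (i : ℕ) :
    PowerSeries.coeff (2 * i) (f * f) = PowerSeries.coeff i f ^ 2 := by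
  rw [PowerSeries.coeff_mul]
  have hmem : (i, i) ∈ Finset.HasAntidiagonal.antidiagonal (2 * i) := by
    rw [Finset.HasAntidiagonal.mem_antidiagonal]; omega
  rw [← Finset.add_sum_erase _ _ hmem]
  -- The off-diagonal terms `(a, b)` and `(b, a)` cancel in pairs.
  have h0 : ∑ x ∈ (Finset.HasAntidiagonal.antidiagonal (2 * i)).erase (i, i),
      PowerSeries.coeff x.1 f * PowerSeries.coeff x.2 f = 0 := by
    refine Finset.sum_involution (fun x _ => x.swap) ?_ ?_ ?_ ?_
    · rintro ⟨a, b⟩ _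
      simp only [Prod.swap_prod_mk]
      rw [mul_comm (PowerSeries.coeff b f)]
      exact CharTwo.add_self_eq_zero _
    · rintro ⟨a, b⟩ h _ heq
      simp only [Finset.mem_erase, Finset.HasAntidiagonal.mem_antidiagonal, Prod.mk.injEq,
        Prod.swap_prod_mk, ne_eq] at h heq
      omega
    · rintro ⟨a, b⟩ h
      simp only [Finset.mem_erase, Finset.HasAntidiagonal.mem_antidiagonal, Prod.mk.injEq,
        Prod.swap_prod_mk, ne_eq] at h ⊢
      omega
    · rintro ⟨a, b⟩ _
      rfl
  rw [h0, add_zero, sq]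

/-- In characteristic 2, sequences satisfying the Newton identities behave like power sums:
`T_{2i} = T_i²`. -/
lemma newton_sq {F : Type*} [Field F] [CharP F 2] (s T : ℕ → F) (hs : s 0 = 1)
    (h : ∀ i, 1 ≤ i → ∑ j ∈ Finset.range i, s j * T (i - j) = i * s i) (i : ℕ) (hi : 1 ≤ i) :
    T (2 * i) = T i ^ 2 := by
  set f : PowerSeries F := PowerSeries.mk fun i => if i = 0 then 0 else T i with hf
  set g : PowerSeries F := PowerSeries.mk s with hg
  set D : PowerSeries F → PowerSeries F := fun p => PowerSeries.X * PowerSeries.derivative F p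
    with hD
  have coeffD : ∀ (p : PowerSeries F) (k : ℕ),
      PowerSeries.coeff k (D p) = k * PowerSeries.coeff k p := by
    intro p k
    cases k with
    | zero => simp [hD]
    | succ k =>
      simp only [hD, PowerSeries.coeff_succ_X_mul, PowerSeries.coeff_derivative]
      push_cast
      ring
  have h1 : g * f = D g := by
    ext k
    rw [coeffD, PowerSeries.coeff_mul, Finset.Nat.sum_antidiagonal_eq_sum_range_succ_mk,
      Finset.sum_range_succ]
    rcases Nat.eq_zero_or_pos k with rfl | hk
    · simp [hf]
    · simp only [hf, hg, PowerSeries.coeff_mk, Nat.sub_self, if_true, mul_zero, add_zero]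
      rw [← h k hk]
      refine Finset.sum_congr rfl fun j hj => ?_
      rw [if_neg]
      have := Finset.mem_range.1 hj
      omega
  -- The eigenvalues `k` of `D` satisfy `k² = k` in characteristic 2.
  have h2 : D (D g) = D g := by
    ext k
    rw [coeffD, coeffD, ← mul_assoc]
    congr 1
    rcases Nat.even_or_odd k with hk | hk
    · simp [(CharP.cast_eq_zero_iff F 2 k).2 hk.two_dvd]
    · obtain ⟨c, rfl⟩ := hk
      simp [CharTwo.two_eq_zero]
  have h3 : D (g * f) = D g * f + g * D f := by
    simp only [hD, Derivation.leibniz, smul_eq_mul]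
    ring
  have hg0 : g ≠ 0 := by
    intro h0
    have := congrArg (PowerSeries.coeff 0) h0
    simp [hg, hs] at this
  have h4 : f * f + D f = f := by
    apply mul_left_cancel₀ hg0
    calc g * (f * f + D f) = (g * f) * f + g * D f := by ring
      _ = D g * f + g * D f := by rw [h1]
      _ = D (g * f) := h3.symm
      _ = g * f := by rw [h1, h2]
  have h5 := congrArg (PowerSeries.coeff (2 * i)) h4
  rw [map_add, coeff_two_mul_sq, coeffD] at h5
  have hi0 : i ≠ 0 := by omega
  simp only [hf, PowerSeries.coeff_mk] at h5
  simpa [hi0, CharTwo.two_eq_zero] using h5.symm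

/-- If `S` satisfies the linear recurrence `∑_{k ≤ w} s_k S_{i-k} = 0` on `ZMod n` with `s₀ = 1`,
then its transform `∑_i S_i α^(-ij)` is nonzero for at most `w` values of `j`. -/
lemma wt_le_of_recurrence {n w : ℕ} [NeZero n] (α : K) (hα : IsPrimitiveRoot α n)
    (s : ℕ → K) (hs : s 0 = 1) (S : ZMod n → K)
    (hrec : ∀ i : ZMod n, ∑ k ∈ Finset.range (w + 1), s k * S (i - (k : ZMod n)) = 0)
    (e : ZMod n → K) (he : ∀ j : ZMod n, e j = ∑ i : ZMod n, S i * (α ^ (i.val * j.val))⁻¹) :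
    wt e ≤ w := by
  classical
  set P : Polynomial K := ∑ k ∈ Finset.range (w + 1), Polynomial.C (s k) * Polynomial.X ^ k with hP
  have hPdeg : P.natDegree ≤ w := by
    refine Polynomial.natDegree_sum_le_of_forall_le _ _ fun k hk => ?_
    refine (Polynomial.natDegree_C_mul_X_pow_le _ _).trans ?_
    have := Finset.mem_range.1 hk
    omega
  have hP0 : P ≠ 0 := by
    intro h0
    have := congrArg (fun p => Polynomial.coeff p 0) h0
    simp [hP, Polynomial.finsetSum_coeff, Polynomial.coeff_X_pow, hs] at this
  have hroot : ∀ j, P.eval ((α ^ j.val)⁻¹) * e j = 0 := by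
    intro j
    set β : K := (α ^ j.val)⁻¹ with hβ
    have hβn : β ^ n = 1 := by
      rw [hβ, inv_pow, ← pow_mul, mul_comm, pow_mul, hα.pow_eq_one, one_pow, inv_one]
    have he' : e j = ∑ i : ZMod n, S i * β ^ i.val := by
      rw [he]
      refine Finset.sum_congr rfl fun i _ => ?_
      rw [hβ, inv_pow, ← pow_mul, mul_comm i.val]
    have hshift : ∀ k : ℕ, β ^ k * e j = ∑ i : ZMod n, S (i - (k : ZMod n)) * β ^ i.val := by
      intro k
      rw [he', Finset.mul_sum]
      refine Eq.trans ?_ (Equiv.sum_comp (Equiv.addRight (k : ZMod n)) _)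
      refine Finset.sum_congr rfl fun i _ => ?_
      have hv : β ^ (i + (k : ZMod n)).val = β ^ i.val * β ^ k := by
        rw [← pow_add, ZMod.val_add, ZMod.val_natCast, Nat.add_mod_mod]
        exact (pow_eq_pow_mod _ hβn).symm
      rw [Equiv.coe_addRight, add_sub_cancel_right, hv]
      ring
    calc P.eval β * e j = ∑ k ∈ Finset.range (w + 1), s k * (β ^ k * e j) := by
          simp [hP, Polynomial.eval_finsetSum, Finset.sum_mul, mul_assoc]
      _ = ∑ k ∈ Finset.range (w + 1), ∑ i : ZMod n, s k * (S (i - (k : ZMod n)) * β ^ i.val) := by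
          simp_rw [hshift, Finset.mul_sum]
      _ = ∑ i : ZMod n, (∑ k ∈ Finset.range (w + 1), s k * S (i - (k : ZMod n))) * β ^ i.val := by
          rw [Finset.sum_comm]
          simp_rw [Finset.sum_mul, mul_assoc]
      _ = 0 := by simp [hrec]
  have hinj : Function.Injective fun j : ZMod n => (α ^ j.val)⁻¹ := by
    intro a b hab
    exact ZMod.val_injective n (hα.pow_inj (ZMod.val_lt a) (ZMod.val_lt b) (inv_injective hab))
  calc wt e = (Finset.univ.filter fun j => e j ≠ 0).card := by
        rw [wt, ← Set.ncard_coe_finset]; simp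
    _ = ((Finset.univ.filter fun j => e j ≠ 0).image fun j : ZMod n => (α ^ j.val)⁻¹).card :=
        (Finset.card_image_of_injective _ hinj).symm
    _ ≤ P.natDegree := by
        apply Polynomial.card_le_degree_of_subset_roots
        intro y hy
        obtain ⟨j, hj, rfl⟩ := Finset.mem_image.1 hy
        rw [Polynomial.mem_roots hP0]
        exact (mul_eq_zero.1 (hroot j)).resolve_right (Finset.mem_filter.1 hj).2
    _ ≤ w := hPdeg

/-- If `S_{2i} = S_i²` on `ZMod n` with `n` odd, then the transform `∑_i S_i α^(-ij)` is binary: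
squaring it permutes its summands. -/
lemma isBinary_of_sq {n : ℕ} [NeZero n] (hodd : Odd n) (α : K) (hα : IsPrimitiveRoot α n)
    (S : ZMod n → K) (hsq : ∀ i, S (2 * i) = S i ^ 2)
    (e : ZMod n → K) (he : ∀ j : ZMod n, e j = ∑ i : ZMod n, S i * (α ^ (i.val * j.val))⁻¹) :
    isBinary e := by
  have : CharP K 2 := charP_of_injective_algebraMap (algebraMap F2 K).injective 2
  intro j
  have hbij : Function.Bijective fun i : ZMod n => 2 * i := by
    have hu : IsUnit (2 : ZMod n) := by
      have := (ZMod.isUnit_iff_coprime 2 n).2 (Nat.coprime_two_left.2 hodd)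
      simpa using this
    exact (Finite.injective_iff_bijective).1 fun a b hab => hu.mul_left_cancel hab
  have h : e j ^ 2 = e j := by
    conv_rhs => rw [he, ← hbij.sum_comp]
    rw [he, CharTwo.sum_sq]
    refine Finset.sum_congr rfl fun i _ => ?_
    rw [hsq, mul_pow, inv_pow]
    congr 2
    have hv : (2 * i).val = (2 * i.val) % n := by
      rw [two_mul, two_mul, ZMod.val_add]
    have hαj : (α ^ j.val) ^ n = 1 := by
      rw [← pow_mul, mul_comm, pow_mul, hα.pow_eq_one, one_pow]
    rw [mul_comm (2 * i).val, pow_mul α j.val, hv, ← pow_eq_pow_mod _ hαj]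
    ring
  have h' : e j * (e j - 1) = 0 := by linear_combination h
  rcases mul_eq_zero.1 h' with h0 | h0
  · exact Or.inl h0
  · exact Or.inr (sub_eq_zero.1 h0)

/-- any point of `V(I_{N,w})` gives, through the inverse Fourier transform
of its `S`-coordinates, a word `e` that is binary (coordinates in `F₂ ⊆ K`) and of
weight at most `w`. -/
theorem inverseFourier_of_newtonVariety_isBinary_and_wt_le (n m w : ℕ) [NeZero n] (hodd : Odd n) (hm : 0 < m)
    (hdvd : n ∣ 2 ^ m - 1) (hw1 : 1 ≤ w) (hwn : w ≤ n)
    (α : K) (hα : IsPrimitiveRoot α n)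
    (x : Fin w ⊕ ZMod n → K)
    (hx : ∀ p ∈ newtonIdeal n w, MvPolynomial.aeval x p = 0)
    (e : ZMod n → K)
    (he : ∀ j : ZMod n, e j = ∑ i : ZMod n, x (Sum.inr i) * (α ^ (i.val * j.val))⁻¹) :
    isBinary e ∧ wt e ≤ w := by
  have : CharP K 2 := charP_of_injective_algebraMap (algebraMap F2 K).injective 2
  set S : ZMod n → K := fun i => x (Sum.inr i) with hS
  set s : ℕ → K := fun k => if k = 0 then 1 else aeval x (sigv n w k) with hs
  have hs0 : s 0 = 1 := by simp [hs]
  have hsw : ∀ k, w < k → s k = 0 := by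
    intro k hk
    have h1 : k ≠ 0 := by omega
    have h2 : ¬ (1 ≤ k ∧ k ≤ w) := by omega
    simp [hs, sigv, h1, h2]
  have hsig : ∀ k, 1 ≤ k → aeval x (sigv n w k) = s k := by
    intro k hk
    have h1 : k ≠ 0 := by omega
    simp [hs, h1]
  have hSv : ∀ k, aeval x (Sv n w k) = S (k : ZMod n) := by
    intro k
    simp [Sv, hS]
  have hN : ∀ i, 1 ≤ i → i ≤ n + w → aeval x (newtonPoly n w i) = 0 := fun i h1 h2 =>
    hx _ (Ideal.subset_span ⟨i, ⟨h1, h2⟩, rfl⟩)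
  have hlow : ∀ i, 1 ≤ i → i ≤ w →
      ∑ j ∈ Finset.range i, s j * S ((i - j : ℕ) : ZMod n) = i * s i := by
    intro i h1 h2
    have h := hN i h1 (by omega)
    rw [newtonPoly, if_pos h2, map_add, map_add, map_sum, map_mul, map_natCast, hsig i h1,
      hSv] at h
    rw [Finset.range_eq_Ico, Finset.sum_eq_sum_Ico_succ_bot (by omega), hs0, one_mul, Nat.sub_zero]
    rw [CharTwo.add_eq_zero] at h
    rw [← h]
    congr 1
    refine Finset.sum_congr rfl fun j hj => ?_
    rw [map_mul, hSv, hsig j (Finset.mem_Ico.1 hj).1]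
  -- The indices `w < i ≤ n + w` run over all residues modulo `n`.
  have hrec : ∀ i : ZMod n, ∑ k ∈ Finset.range (w + 1), s k * S (i - (k : ZMod n)) = 0 := by
    intro i
    set N : ℕ := w + 1 + (i - ((w + 1 : ℕ) : ZMod n)).val with hNdef
    have hNi : (N : ZMod n) = i := by
      rw [hNdef, Nat.cast_add, ZMod.natCast_zmod_val]
      ring
    have hlt := ZMod.val_lt (i - ((w + 1 : ℕ) : ZMod n))
    have h := hN N (by omega) (by omega)
    rw [newtonPoly, if_neg (by omega), map_add, map_sum, hSv, hNi] at h
    rw [Finset.range_eq_Ico, Finset.sum_eq_sum_Ico_succ_bot (by omega), hs0, one_mul,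
      Nat.cast_zero, sub_zero, ← h]
    congr 1
    refine Finset.sum_congr rfl fun j hj => ?_
    have hj' := Finset.mem_Ico.1 hj
    rw [map_mul, hSv, hsig j (by omega), Nat.cast_sub (by omega), hNi]
  have hnewton : ∀ i, 1 ≤ i →
      ∑ j ∈ Finset.range i, s j * S ((i - j : ℕ) : ZMod n) = i * s i := by
    intro i hi
    rcases le_or_gt i w with hiw | hiw
    · exact hlow i hi hiw
    · rw [hsw i hiw, mul_zero, ← hrec i]
      symm
      calc _ = ∑ k ∈ Finset.range (w + 1), s k * S ((i - k : ℕ) : ZMod n) := by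
            refine Finset.sum_congr rfl fun k hk => ?_
            have := Finset.mem_range.1 hk
            rw [Nat.cast_sub (by omega)]
        _ = _ := by
            refine Finset.sum_subset (Finset.range_mono (by omega)) fun k _ hk => ?_
            rw [Finset.mem_range] at hk
            rw [hsw k (by omega), zero_mul]
  have hsq : ∀ i, S (2 * i) = S i ^ 2 := by
    intro i
    -- `newton_sq` needs a positive index, hence the representative `i.val + n` of `i`.
    have h := newton_sq s (fun k => S (k : ZMod n)) hs0 hnewton (i.val + n)
      (by have := NeZero.pos n; omega)
    simpa using h
  exact ⟨isBinary_of_sq hodd α hα S hsq e he, wt_le_of_recurrence α hα s hs0 S hrec e he⟩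
end

section
/- Let (σ_1,…,σ_w, S_0,…,S_{n−1}) ∈ V(I_{N,w}) ⊆ K^{w+n}, and define e ∈ K^n by the inverse Fourier transform e_j = Σ_{i=0}^{n−1} S_i α^{−ij}. Then e is a binary word (e ∈ F_2^n) of weight at most w and, setting σ(Z) = 1 + Σ_{i=1}^{w} σ_i Z^i ∈ K[Z], there exist an integer l ≥ 0 and a polynomial G(Z) ∈ K[Z] such that σ(Z) = σ_e(Z)·G(Z)^2·Z^l, where σ_e is the locator polynomial of e. -/
/-!
Write `σ(Z) = 1 + ∑ σᵢ Zⁱ` and `F(Z) = ∑_{i ≥ 1} Sᵢ Zⁱ`. The first `n + w` Newton identities say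
that the coefficients of `σ F + Z σ'` vanish up to degree `n + w`; since the `Sᵢ` are `n`-periodic,
the remaining coefficients vanish too. Multiplying by `1 - Zⁿ` turns `F` into the polynomial
`P(Z) = ∑_{i=1}^n Sᵢ Zⁱ` and gives the polynomial identity
`σ P = (Zⁿ - 1) Z σ'` (`key_identity`).

Compare both sides at a point `β`, where `σ` vanishes to order `k ≥ 0` (`local_identity`):
* if `β = α⁻ʲ`, then `k = P(β) = eⱼ` in `K`, so `eⱼ ∈ {0, 1}` is the parity of `k`;
* if `β ≠ 0` and `βⁿ ≠ 1`, then `k = 0` in `K`, so `k` is even (and `k = 0` if `β = 0`).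
Hence the roots of `σ` of odd multiplicity are exactly the inverses of the locators of `e`. Splitting
each `(Z - β)ᵏ` into `(Z - β)^(k % 2)` and a square, and using that all constants of `K` are squares,
yields `σ = σ_e G²`. The weight bound follows by comparing degrees.
-/

open MvPolynomial

noncomputable section

open scoped Classical in
/-- The locator polynomial `σ_e(Z) = ∏ (1 − α^u · Z)`, the product being over the
nonzero positions `u` of the (binary) word `e`. -/
def locPoly {n : ℕ} [NeZero n] (α : K) (e : ZMod n → K) : Polynomial K :=
  ∏ u ∈ Finset.univ.filter (fun j : ZMod n => e j ≠ 0),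
    (1 - Polynomial.C (α ^ u.val) * Polynomial.X)

end

/-! ### The polynomials `σ` and `P` -/

/-- The polynomial `1 + ∑ σᵢ Zⁱ` attached to a point of the Newton variety. -/
noncomputable def sigPoly {n w : ℕ} (x : Fin w ⊕ ZMod n → K) : Polynomial K :=
  1 + ∑ i : Fin w, Polynomial.C (x (Sum.inl i)) * Polynomial.X ^ ((i : ℕ) + 1)

/-- The polynomial `∑_{i=1}^n Sᵢ Zⁱ`, one period of the sequence `S`. -/
noncomputable def perPoly {n w : ℕ} (x : Fin w ⊕ ZMod n → K) : Polynomial K :=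
  ∑ i ∈ Finset.range n, Polynomial.C (x (Sum.inr ((i + 1 : ℕ) : ZMod n))) * Polynomial.X ^ (i + 1)

lemma sigPoly_coeff_zero {n w : ℕ} (x : Fin w ⊕ ZMod n → K) : (sigPoly x).coeff 0 = 1 := by
  simp [sigPoly, Polynomial.finsetSum_coeff]

lemma sigPoly_coeff {n w : ℕ} (x : Fin w ⊕ ZMod n → K) (j : ℕ) (hj : 1 ≤ j) :
    (sigPoly x).coeff j = MvPolynomial.aeval x (sigv n w j) := by
  obtain ⟨j, rfl⟩ : ∃ i, j = i + 1 := ⟨j - 1, by omega⟩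
  simp only [sigPoly, Polynomial.coeff_add, Polynomial.finsetSum_coeff,
    Polynomial.coeff_C_mul, Polynomial.coeff_X_pow, Polynomial.coeff_one, sigv]
  by_cases h : j < w
  · rw [dif_pos ⟨hj, h⟩, Finset.sum_eq_single (⟨j, h⟩ : Fin w)]
    · simp
    · intro b _ hb
      have : j ≠ (b : ℕ) := fun h' => hb (Fin.ext h'.symm)
      simp [this]
    · simp
  · rw [dif_neg (by omega), Finset.sum_eq_zero]
    · simp
    · intro b _
      have : j ≠ (b : ℕ) := by have := b.2; omega
      simp [this]

lemma sigPoly_coeff_of_lt {n w : ℕ} (x : Fin w ⊕ ZMod n → K) (j : ℕ) (hj : w < j) :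
    (sigPoly x).coeff j = 0 := by
  rw [sigPoly_coeff x j (by omega), sigv, dif_neg (by omega), map_zero]

lemma sigPoly_natDegree_le {n w : ℕ} (x : Fin w ⊕ ZMod n → K) : (sigPoly x).natDegree ≤ w :=
  Polynomial.natDegree_le_iff_coeff_eq_zero.2 fun j hj => sigPoly_coeff_of_lt x j hj

lemma sigPoly_ne_zero {n w : ℕ} (x : Fin w ⊕ ZMod n → K) : sigPoly x ≠ 0 := by
  intro h
  have := sigPoly_coeff_zero x
  simp [h] at this

/-! ### Newton identities as a power series identity -/

lemma newton_eval {n w : ℕ} (x : Fin w ⊕ ZMod n → K)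
    (hx : ∀ p ∈ newtonIdeal n w, MvPolynomial.aeval x p = 0) (i : ℕ) (h1 : 1 ≤ i)
    (h2 : i ≤ n + w) : MvPolynomial.aeval x (newtonPoly n w i) = 0 :=
  hx _ (Ideal.subset_span ⟨i, ⟨h1, h2⟩, rfl⟩)

/-- The Newton identities beyond degree `w`; the restriction `i ≤ n + w` disappears because the
identities are `n`-periodic in `i` there. -/
lemma newton_high {n w : ℕ} [NeZero n] (x : Fin w ⊕ ZMod n → K)
    (hx : ∀ p ∈ newtonIdeal n w, MvPolynomial.aeval x p = 0) (i : ℕ) (hi : w < i) :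
    x (Sum.inr (i : ZMod n)) + ∑ j ∈ Finset.Icc 1 w,
      (sigPoly x).coeff j * x (Sum.inr ((i - j : ℕ) : ZMod n)) = 0 := by
  induction i using Nat.strong_induction_on with
  | _ i ih =>
    by_cases h : i ≤ n + w
    · have := newton_eval x hx i (by omega) h
      rw [newtonPoly, if_neg (by omega)] at this
      simp only [map_add, map_sum, map_mul, Sv, MvPolynomial.aeval_X] at this
      rw [← this]
      congr 1
      refine Finset.sum_congr rfl fun j hj => ?_
      rw [sigPoly_coeff x j (Finset.mem_Icc.1 hj).1]
    · have hn : 0 < n := NeZero.pos n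
      rw [← ih (i - n) (by omega) (by omega)]
      have e1 : ∀ j ≤ w, ((i - j : ℕ) : ZMod n) = ((i - n - j : ℕ) : ZMod n) := by
        intro j hj
        have : i - j = (i - n - j) + n := by omega
        rw [this]; simp
      congr 1
      · exact congrArg (fun t => x (Sum.inr t)) (e1 0 (Nat.zero_le _))
      · refine Finset.sum_congr rfl fun j hj => ?_
        rw [e1 j (Finset.mem_Icc.1 hj).2]

/-- The power series `∑_{i ≥ 1} Sᵢ Zⁱ`, with constant term `0` rather than `S₀`. -/
noncomputable def serS {n w : ℕ} (x : Fin w ⊕ ZMod n → K) : PowerSeries K :=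
  PowerSeries.mk fun i => if i = 0 then 0 else x (Sum.inr (i : ZMod n))

lemma series_identity {n w : ℕ} [NeZero n] (x : Fin w ⊕ ZMod n → K)
    (hx : ∀ p ∈ newtonIdeal n w, MvPolynomial.aeval x p = 0) :
    (sigPoly x : PowerSeries K) * serS x
      + ((Polynomial.X * Polynomial.derivative (sigPoly x) : Polynomial K) : PowerSeries K) = 0 := by
  ext i
  rw [map_add, PowerSeries.coeff_mul, Polynomial.coeff_coe, map_zero,
    Finset.Nat.sum_antidiagonal_eq_sum_range_succ
      (f := fun a b => PowerSeries.coeff a (sigPoly x : PowerSeries K)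
        * PowerSeries.coeff b (serS x))]
  simp only [Polynomial.coeff_coe, serS, PowerSeries.coeff_mk]
  rcases Nat.eq_zero_or_pos i with rfl | hi
  · simp
  have hd : (Polynomial.X * Polynomial.derivative (sigPoly x)).coeff i
      = (i : K) * (sigPoly x).coeff i := by
    obtain ⟨i, rfl⟩ : ∃ k, i = k + 1 := ⟨i - 1, by omega⟩
    rw [Polynomial.coeff_X_mul, Polynomial.coeff_derivative]
    push_cast; ring
  rw [hd, Finset.sum_range_succ, Finset.range_eq_Ico, Finset.sum_eq_sum_Ico_succ_bot hi]
  have hs : ∑ k ∈ Finset.Ico (0 + 1) i, (sigPoly x).coeff k *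
        (if i - k = 0 then 0 else x (Sum.inr ((i - k : ℕ) : ZMod n)))
      = ∑ k ∈ Finset.Ico 1 i, (sigPoly x).coeff k * x (Sum.inr ((i - k : ℕ) : ZMod n)) := by
    refine Finset.sum_congr rfl fun k hk => ?_
    have := Finset.mem_Ico.1 hk
    rw [if_neg (by omega)]
  rw [hs, sigPoly_coeff_zero, Nat.sub_zero, if_neg hi.ne', Nat.sub_self, if_pos rfl, one_mul,
    mul_zero, add_zero]
  by_cases hw : i ≤ w
  · have := newton_eval x hx i hi (by omega)
    rw [newtonPoly, if_pos hw] at this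
    simp only [map_add, map_sum, map_mul, Sv, MvPolynomial.aeval_X, map_natCast] at this
    rw [← this, sigPoly_coeff x i hi]
    congr 2
    refine Finset.sum_congr rfl fun j hj => ?_
    rw [sigPoly_coeff x j (Finset.mem_Ico.1 hj).1]
  · rw [sigPoly_coeff_of_lt x i (by omega), mul_zero, add_zero,
      ← newton_high x hx i (by omega)]
    congr 1
    refine (Finset.sum_subset (fun j hj => ?_) fun j hj hj' => ?_).symm
    · simp only [Finset.mem_Icc, Finset.mem_Ico] at hj ⊢; omega
    · simp only [Finset.mem_Icc, Finset.mem_Ico] at hj hj'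
      rw [sigPoly_coeff_of_lt x j (by omega), zero_mul]

lemma perPoly_coeff {n w : ℕ} (x : Fin w ⊕ ZMod n → K) (i : ℕ) :
    (perPoly x).coeff i = if 1 ≤ i ∧ i ≤ n then x (Sum.inr (i : ZMod n)) else 0 := by
  simp only [perPoly, Polynomial.finsetSum_coeff, Polynomial.coeff_C_mul, Polynomial.coeff_X_pow]
  split_ifs with h
  · obtain ⟨i, rfl⟩ : ∃ k, i = k + 1 := ⟨i - 1, by omega⟩
    rw [Finset.sum_eq_single i]
    · simp
    · intro b _ hb
      simp [Ne.symm hb]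
    · intro hh
      exact absurd (Finset.mem_range.2 (by omega)) hh
  · refine Finset.sum_eq_zero fun b hb => ?_
    have := Finset.mem_range.1 hb
    rw [if_neg (by omega), mul_zero]

lemma series_period {n w : ℕ} [NeZero n] (x : Fin w ⊕ ZMod n → K) :
    serS x * (1 - PowerSeries.X ^ n) = (perPoly x : PowerSeries K) := by
  have hn : 0 < n := NeZero.pos n
  ext i
  rw [mul_sub, mul_one, map_sub, PowerSeries.coeff_mul_X_pow', Polynomial.coeff_coe, perPoly_coeff]
  simp only [serS, PowerSeries.coeff_mk]
  rcases lt_trichotomy i n with h | h | h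
  · rw [if_neg (not_le.2 h), sub_zero]
    rcases Nat.eq_zero_or_pos i with rfl | hi
    · simp
    · rw [if_neg hi.ne', if_pos ⟨hi, h.le⟩]
  · subst h
    rw [if_neg hn.ne', if_pos le_rfl, Nat.sub_self, if_pos rfl, if_pos ⟨hn, le_rfl⟩, sub_zero]
  · rw [if_neg (by omega), if_pos h.le, if_neg (by omega), if_neg (by omega)]
    have : ((i - n : ℕ) : ZMod n) = (i : ZMod n) := by
      rw [Nat.cast_sub h.le]; simp
    rw [this, sub_self]

/-- All the Newton identities at once, as an equation between polynomials. -/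
lemma key_identity {n w : ℕ} [NeZero n] (x : Fin w ⊕ ZMod n → K)
    (hx : ∀ p ∈ newtonIdeal n w, MvPolynomial.aeval x p = 0) :
    sigPoly x * perPoly x
      = ((Polynomial.X ^ n - 1) * Polynomial.X) * Polynomial.derivative (sigPoly x) := by
  apply Polynomial.coe_injective K
  have h := series_identity x hx
  rw [Polynomial.coe_mul, ← series_period x]
  push_cast at h ⊢
  linear_combination (1 - PowerSeries.X ^ n) * h

/-! ### Multiplicities of the roots of `σ` -/

/-- Logarithmic derivative at a zero `β` of order `k` (possibly `0`), with denominators cleared. -/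
lemma local_identity {f P D : Polynomial K} (hf : f ≠ 0)
    (h : f * P = D * Polynomial.derivative f) (β : K) :
    ∃ g : Polynomial K, g.eval β ≠ 0 ∧ (Polynomial.X - Polynomial.C β) * (g * P)
      = D * ((f.rootMultiplicity β : Polynomial K) * g
        + (Polynomial.X - Polynomial.C β) * Polynomial.derivative g) := by
  obtain ⟨g, hg, hnd⟩ := Polynomial.exists_eq_pow_rootMultiplicity_mul_and_not_dvd f hf β
  set k := f.rootMultiplicity β with hk
  refine ⟨g, fun h0 => hnd (Polynomial.dvd_iff_isRoot.2 h0), ?_⟩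
  have hX : (Polynomial.X - Polynomial.C β) ^ k ≠ 0 := pow_ne_zero _ (Polynomial.X_sub_C_ne_zero β)
  apply mul_left_cancel₀ hX
  have hd : (Polynomial.X - Polynomial.C β) * Polynomial.derivative f
      = (Polynomial.X - Polynomial.C β) ^ k * ((k : Polynomial K) * g
        + (Polynomial.X - Polynomial.C β) * Polynomial.derivative g) := by
    conv_lhs => rw [hg]
    rw [Polynomial.derivative_mul, Polynomial.derivative_X_sub_C_pow]
    rcases Nat.eq_zero_or_pos k with h0 | h0
    · simp [h0]
    · obtain ⟨t, ht⟩ : ∃ t, k = t + 1 := ⟨k - 1, by omega⟩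
      rw [ht]; simp only [Nat.add_sub_cancel, pow_succ, Polynomial.C_eq_natCast]; ring
  have h' : ((Polynomial.X - Polynomial.C β) ^ k * g) * P = D * Polynomial.derivative f := by
    rw [← hg, h]
  linear_combination (Polynomial.X - Polynomial.C β) * h' + D * hd

lemma natCast_K_of_odd {k : ℕ} (h : Odd k) : (k : K) = 1 := by
  obtain ⟨t, rfl⟩ := h
  push_cast
  rw [show (2 : K) = 0 from CharTwo.two_eq_zero]; ring

lemma natCast_K_of_even {k : ℕ} (h : Even k) : (k : K) = 0 :=
  (CharP.cast_eq_zero_iff K 2 k).2 h.two_dvd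

/-- At an `n`-th root of unity, the order of vanishing of `f` is given modulo two by `P`. -/
lemma mult_eq_of_root {n : ℕ} (hodd : Odd n) {f P : Polynomial K} (hf : f ≠ 0)
    (h : f * P = ((Polynomial.X ^ n - 1) * Polynomial.X) * Polynomial.derivative f) (β : K)
    (hβ : β ^ n = 1) : (f.rootMultiplicity β : K) = P.eval β := by
  obtain ⟨g, hg, he⟩ := local_identity hf h β
  have hn : n ≠ 0 := by rintro rfl; simp at hodd
  obtain ⟨q, hq⟩ : (Polynomial.X - Polynomial.C β) ∣ (Polynomial.X ^ n - 1 : Polynomial K) :=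
    Polynomial.dvd_iff_isRoot.2 (by simp [hβ])
  -- `q(β)` is the derivative of `Zⁿ - 1` at `β`.
  have hqβ : q.eval β * β = 1 := by
    have := congrArg (fun p => (Polynomial.derivative p).eval β) hq
    simp only [Polynomial.derivative_sub, Polynomial.derivative_X_pow, Polynomial.derivative_one,
      Polynomial.derivative_mul, Polynomial.derivative_X, Polynomial.derivative_C,
      Polynomial.eval_add, Polynomial.eval_sub, Polynomial.eval_mul, Polynomial.eval_X,
      Polynomial.eval_C, Polynomial.eval_pow,
      sub_self, sub_zero, zero_mul, add_zero, one_mul] at this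
    rw [← this, natCast_K_of_odd hodd, one_mul, ← pow_succ, Nat.sub_add_cancel (by omega), hβ]
  rw [hq] at he
  have he' : g * P = (q * Polynomial.X) * ((f.rootMultiplicity β : Polynomial K) * g
        + (Polynomial.X - Polynomial.C β) * Polynomial.derivative g) := by
    apply mul_left_cancel₀ (Polynomial.X_sub_C_ne_zero β)
    rw [he]; ring
  have := congrArg (Polynomial.eval β) he'
  simp only [Polynomial.eval_add, Polynomial.eval_sub, Polynomial.eval_mul, Polynomial.eval_X,
      Polynomial.eval_C, Polynomial.eval_natCast, sub_self, zero_mul, add_zero, hqβ, one_mul] at this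
  exact mul_left_cancel₀ hg (by rw [this, mul_comm])

lemma mult_even_of_not_root {n : ℕ} {f P : Polynomial K} (hf0 : f.coeff 0 ≠ 0)
    (h : f * P = ((Polynomial.X ^ n - 1) * Polynomial.X) * Polynomial.derivative f) (β : K)
    (hβ : β ^ n ≠ 1) : Even (f.rootMultiplicity β) := by
  have hf : f ≠ 0 := by rintro rfl; simp at hf0
  by_cases hβ0 : β = 0
  · subst hβ0
    rw [Polynomial.rootMultiplicity_eq_zero]
    · exact Even.zero
    · rwa [Polynomial.IsRoot, ← Polynomial.coeff_zero_eq_eval_zero]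
  obtain ⟨g, hg, he⟩ := local_identity hf h β
  have := congrArg (Polynomial.eval β) he
  simp only [Polynomial.eval_add, Polynomial.eval_sub, Polynomial.eval_mul, Polynomial.eval_X,
      Polynomial.eval_C, Polynomial.eval_natCast, sub_self, zero_mul, add_zero,
      Polynomial.eval_pow, Polynomial.eval_one] at this
  have h2 : (f.rootMultiplicity β : K) = 0 := by
    have := this.symm
    simpa [hβ0, hg, sub_eq_zero, hβ] using this
  exact even_iff_two_dvd.2 ((CharP.cast_eq_zero_iff K 2 _).1 h2)

/-! ### Inverse Fourier transform -/

lemma sum_zmod_shift {n : ℕ} [NeZero n] (f : ZMod n → K) :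
    ∑ i ∈ Finset.range n, f ((i + 1 : ℕ) : ZMod n) = ∑ i : ZMod n, f i := by
  rw [← Equiv.sum_comp (Equiv.addRight (1 : ZMod n)) f]
  refine Finset.sum_bij' (fun i _ => (i : ZMod n)) (fun i _ => i.val) ?_ ?_ ?_ ?_ ?_
  · simp
  · intro a _; exact Finset.mem_range.2 (ZMod.val_lt a)
  · intro a ha; exact ZMod.val_cast_of_lt (Finset.mem_range.1 ha)
  · intro a _; simp
  · intro a _; simp

/-- Evaluating one period of `S` at `α⁻ʲ` is the inverse Fourier transform. -/
lemma perPoly_eval {n w : ℕ} [NeZero n] {α : K} (hα : IsPrimitiveRoot α n)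
    (x : Fin w ⊕ ZMod n → K) (j : ZMod n) :
    (perPoly x).eval ((α ^ j.val)⁻¹)
      = ∑ i : ZMod n, x (Sum.inr i) * (α ^ (i.val * j.val))⁻¹ := by
  rw [← sum_zmod_shift, perPoly, Polynomial.eval_finsetSum]
  refine Finset.sum_congr rfl fun i _ => ?_
  simp only [Polynomial.eval_mul, Polynomial.eval_C, Polynomial.eval_pow, Polynomial.eval_X]
  rw [inv_pow, ZMod.val_natCast, pow_mul α ((i + 1) % n), ← pow_eq_pow_mod _ hα.pow_eq_one,
    pow_right_comm]

/-! ### Factorization -/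

/-- A polynomial whose roots of odd multiplicity are the points of `A` is `∏_{a ∈ A} (Z - a)` times
a square. -/
lemma odd_part_factor (f : Polynomial K) (A : Finset K)
    (hA : ∀ β, β ∈ A ↔ Odd (f.rootMultiplicity β)) :
    ∃ G : Polynomial K, f = (∏ a ∈ A, (Polynomial.X - Polynomial.C a)) * G ^ 2 := by
  classical
  obtain ⟨c, hc⟩ := IsAlgClosed.exists_pow_nat_eq f.leadingCoeff (n := 2) (by norm_num)
  have hprod : (f.roots.map fun a => Polynomial.X - Polynomial.C a).prod
      = ∏ a ∈ f.roots.toFinset, (Polynomial.X - Polynomial.C a) ^ f.rootMultiplicity a := by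
    rw [Finset.prod_multiset_map_count]
    simp
  have hodd : ∏ a ∈ f.roots.toFinset, (Polynomial.X - Polynomial.C a) ^ (f.rootMultiplicity a % 2)
      = ∏ a ∈ A, (Polynomial.X - Polynomial.C a) := by
    symm
    have hsub : A ⊆ f.roots.toFinset := by
      intro a ha
      rw [Multiset.mem_toFinset, ← Multiset.count_pos, Polynomial.count_roots]
      exact ((hA a).1 ha).pos
    rw [← Finset.prod_subset hsub]
    · refine Finset.prod_congr rfl fun a ha => ?_
      rw [Nat.odd_iff.1 ((hA a).1 ha), pow_one]
    · intro a _ ha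
      rw [hA, Nat.not_odd_iff_even] at ha
      rw [Nat.even_iff.1 ha, pow_zero]
  refine ⟨Polynomial.C c *
    ∏ a ∈ f.roots.toFinset, (Polynomial.X - Polynomial.C a) ^ (f.rootMultiplicity a / 2), ?_⟩
  rw [← hodd, mul_pow, ← Polynomial.C_pow, hc, ← Finset.prod_pow, mul_left_comm,
    ← Finset.prod_mul_distrib]
  conv_lhs => rw [(IsAlgClosed.splits f).eq_prod_roots, hprod]
  congr 1
  refine Finset.prod_congr rfl fun a _ => ?_
  rw [← pow_mul, ← pow_add, Nat.mod_add_div']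

/-- any point of `V(I_{N,w})` gives, through the inverse Fourier transform,
a binary word `e` of weight at most `w`, and the polynomial
`σ(Z) = 1 + ∑ σ_i Z^i` factors as `σ_e(Z) · G(Z)² · Z^l` for some `l ≥ 0` and
`G ∈ K[Z]`, where `σ_e` is the locator polynomial of `e`. -/
theorem newtonVariety_locator_factorization (n m w : ℕ) [NeZero n] (hodd : Odd n) (hm : 0 < m)
    (hdvd : n ∣ 2 ^ m - 1) (hw1 : 1 ≤ w) (hwn : w ≤ n)
    (α : K) (hα : IsPrimitiveRoot α n)
    (x : Fin w ⊕ ZMod n → K)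
    (hx : ∀ p ∈ newtonIdeal n w, MvPolynomial.aeval x p = 0)
    (e : ZMod n → K)
    (he : ∀ j : ZMod n, e j = ∑ i : ZMod n, x (Sum.inr i) * (α ^ (i.val * j.val))⁻¹) :
    isBinary e ∧ wt e ≤ w ∧
      ∃ (l : ℕ) (G : Polynomial K),
        (1 + ∑ i : Fin w, Polynomial.C (x (Sum.inl i)) * Polynomial.X ^ ((i : ℕ) + 1))
          = locPoly α e * G ^ 2 * Polynomial.X ^ l := by
  classical
  have hkey := key_identity x hx
  have hne := sigPoly_ne_zero x
  have hα0 : α ≠ 0 := hα.ne_zero (NeZero.ne n)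
  have hroot : ∀ j : ZMod n, ((α ^ j.val)⁻¹) ^ n = 1 := fun j => by
    rw [inv_pow, pow_right_comm, hα.pow_eq_one, one_pow, inv_one]
  have hmult : ∀ j, e j = ((sigPoly x).rootMultiplicity ((α ^ j.val)⁻¹) : K) := fun j => by
    rw [he, mult_eq_of_root hodd hne hkey _ (hroot j), perPoly_eval hα]
  have hbin : isBinary e := fun j => by
    rw [hmult j]
    rcases Nat.even_or_odd ((sigPoly x).rootMultiplicity ((α ^ j.val)⁻¹)) with h | h
    · exact Or.inl (natCast_K_of_even h)
    · exact Or.inr (natCast_K_of_odd h)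
  have hnz : ∀ j, e j ≠ 0 ↔ Odd ((sigPoly x).rootMultiplicity ((α ^ j.val)⁻¹)) := fun j => by
    rw [hmult j, ← Nat.not_even_iff_odd, not_iff_not]
    exact (CharP.cast_eq_zero_iff K 2 _).trans even_iff_two_dvd.symm
  set B : Finset (ZMod n) := Finset.univ.filter (fun j => e j ≠ 0) with hB
  have hinj : Function.Injective (fun j : ZMod n => (α ^ j.val)⁻¹) := fun a b hab =>
    ZMod.val_injective n (hα.pow_inj (ZMod.val_lt a) (ZMod.val_lt b) (inv_injective hab))
  obtain ⟨G, hG⟩ := odd_part_factor (sigPoly x) (B.image fun j => (α ^ j.val)⁻¹) (by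
    intro β
    simp only [Finset.mem_image, hB, Finset.mem_filter, Finset.mem_univ, true_and]
    constructor
    · rintro ⟨j, hj, rfl⟩
      exact (hnz j).1 hj
    · intro hβ
      have hβn : β ^ n = 1 := by
        by_contra hcon
        have h0 : (sigPoly x).coeff 0 ≠ 0 := by rw [sigPoly_coeff_zero]; exact one_ne_zero
        exact Nat.not_even_iff_odd.2 hβ (mult_even_of_not_root h0 hkey β hcon)
      obtain ⟨i, hi, hiβ⟩ := hα.eq_pow_of_pow_eq_one (ξ := β⁻¹) (by rw [inv_pow, hβn, inv_one])
      have hval : (α ^ (i : ZMod n).val)⁻¹ = β := by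
        rw [ZMod.val_cast_of_lt hi, hiβ, inv_inv]
      exact ⟨i, (hnz i).2 (by rwa [hval]), hval⟩)
  rw [Finset.prod_image hinj.injOn] at hG
  -- `1 - α^u Z = -α^u (Z - α^{-u})`; the constants are collected in `c` and absorbed as a square.
  have hloc : locPoly α e = Polynomial.C (∏ u ∈ B, (-α ^ u.val))
      * ∏ u ∈ B, (Polynomial.X - Polynomial.C ((α ^ u.val)⁻¹)) := by
    rw [map_prod, ← Finset.prod_mul_distrib, locPoly]
    refine Finset.prod_congr (by ext; simp [hB]) fun u _ => ?_
    rw [mul_sub, ← Polynomial.C_mul, neg_mul, mul_inv_cancel₀ (pow_ne_zero _ hα0)]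
    simp only [map_neg, map_one]; ring
  have hc0 : ∏ u ∈ B, (-α ^ u.val) ≠ 0 :=
    Finset.prod_ne_zero_iff.2 fun u _ => neg_ne_zero.2 (pow_ne_zero _ hα0)
  obtain ⟨d, hd⟩ := IsAlgClosed.exists_pow_nat_eq (∏ u ∈ B, (-α ^ u.val))⁻¹ (n := 2) (by norm_num)
  refine ⟨hbin, ?_, 0, Polynomial.C d * G, ?_⟩
  · have hcard : wt e = B.card := by
      rw [wt, ← Set.ncard_coe_finset]; congr 1; ext j; simp [hB]
    have hdvd' : (∏ u ∈ B, (Polynomial.X - Polynomial.C ((α ^ u.val)⁻¹))) ∣ sigPoly x :=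
      ⟨_, hG⟩
    have hdeg := Polynomial.natDegree_le_of_dvd hdvd' hne
    rw [Polynomial.natDegree_prod_of_monic _ _ fun u _ => Polynomial.monic_X_sub_C _] at hdeg
    simp only [Polynomial.natDegree_X_sub_C, Finset.sum_const, smul_eq_mul, mul_one] at hdeg
    rw [hcard]
    exact hdeg.trans (sigPoly_natDegree_le x)
  · change sigPoly x = _
    rw [pow_zero, mul_one, mul_pow, ← Polynomial.C_pow, hd, hloc]
    conv_lhs => rw [hG]
    have hone : Polynomial.C (∏ u ∈ B, (-α ^ u.val)) * Polynomial.C (∏ u ∈ B, (-α ^ u.val))⁻¹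
        = 1 := by
      rw [← Polynomial.C_mul, mul_inv_cancel₀ hc0, Polynomial.C_1]
    linear_combination (-(∏ u ∈ B, (Polynomial.X - Polynomial.C ((α ^ u.val)⁻¹))) * G ^ 2) * hone
end

section
/- Assume the ideal I_{N,w} is radical. Then for every polynomial p ∈ F_2[S_0,…,S_{n−1}] (the subring of R in the variables S only), p belongs to I_{N,w} ∩ F_2[S_0,…,S_{n−1}] if and only if p(S_0(e),…,S_{n−1}(e)) = 0 for every binary word e ∈ F_2^n of weight at most w. -/
/-!
Over the algebraically closed field `K`, the Nullstellensatz turns the claim into the statement that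
the points `S` for which some `(σ, S)` is a zero of the Newton ideal are exactly the transforms of
binary words of weight at most `w`.

Put `f(Z) = 1 + ∑ σ_j Z^j` and `S(Z) = ∑_{i ≥ 1} S_i Z^i`, with indices of `S` modulo `n`. The Newton
polynomials at `(σ, S)` are the coefficients of `f S + Z f'`, and by periodicity those of index up to
`n + w` determine all of them. So `(σ, S)` is a zero of the ideal if and only if `f S = Z f'`
(`mem_zeroLocus_newtonIdeal_iff`).

* Let `(σ, S)` be a zero. Multiplying by `1 + Z^n` gives `f T = Z f' (1 + Z^n)` with
  `T = ∑_{i=1}^{n} S_i Z^i`. The values `e_k = T(α^{-k})` form the inverse Fourier transform of `S`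
  (`ft_inverse`), and comparing both sides at `α^{-k}` shows that `e_k` is the multiplicity of
  `α^{-k}` as a root of `f`, reduced modulo `2` (`eval_eq_rootMultiplicity`). Hence `e` is binary, and
  its support injects into the roots of `f`, of which there are at most `deg f ≤ w`.
* Given a binary `e` of weight at most `w`, the polynomial `f = ∏ (1 + α^k Z)` over the support of
  `e` satisfies `f S = Z f'` by the product rule and geometric series (`prod_mul_powerSum`).
-/

open MvPolynomial

/-! ### Newton identities as a power series identity -/

lemma natCast_of_odd {L : Type*} [Field L] [CharP L 2] {n : ℕ} (hodd : Odd n) : (n : L) = 1 := by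
  obtain ⟨k, rfl⟩ := hodd
  push_cast
  rw [CharTwo.two_eq_zero]; ring

/-- The error-locator polynomial `1 + ∑_{j=1}^{w} σ_j Z^j`. Since `Fin w` starts at `0`, the entry
`c j` is the coefficient of `Z^(j+1)`. -/
noncomputable def locator {L : Type*} [Field L] {w : ℕ} (c : Fin w → L) : Polynomial L :=
  1 + ∑ j : Fin w, Polynomial.C (c j) * Polynomial.X ^ (j.val + 1)

lemma locator_coeff_zero {L : Type*} [Field L] {w : ℕ} (c : Fin w → L) :
    (locator c).coeff 0 = 1 := by
  simp [locator, Polynomial.finsetSum_coeff]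

lemma locator_coeff_succ {L : Type*} [Field L] {w : ℕ} (c : Fin w → L) (j : Fin w) :
    (locator c).coeff (j.val + 1) = c j := by
  simp [locator, Polynomial.finsetSum_coeff, Polynomial.coeff_one, Polynomial.coeff_X_pow,
    Fin.val_inj]

lemma locator_coeff_of_lt {L : Type*} [Field L] {w : ℕ} (c : Fin w → L) (j : ℕ) (hj : w < j) :
    (locator c).coeff j = 0 := by
  have h0 : j ≠ 0 := by omega
  simp only [locator, Polynomial.finsetSum_coeff, Polynomial.coeff_one, Polynomial.coeff_add,
    Polynomial.coeff_C_mul, Polynomial.coeff_X_pow, h0, if_false, zero_add]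
  refine Finset.sum_eq_zero fun i _ => ?_
  rw [if_neg (by omega), mul_zero]

/-- The generating series `∑_{i ≥ 1} S_i Z^i` of an `n`-periodic sequence of syndromes. -/
noncomputable def syndromeSeries {L : Type*} [Field L] {n : ℕ} (s : ZMod n → L) : PowerSeries L :=
  PowerSeries.mk fun i => if i = 0 then 0 else s (i : ZMod n)

/-- The `i`-th Newton polynomial at a point `(σ, S)` is the `i`-th coefficient of
`f(Z) S(Z) + Z f'(Z)`, where `f` is the locator polynomial with coefficients `σ`. -/
lemma aeval_newtonPoly {L : Type*} [Field L] [Algebra F2 L] {n w : ℕ}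
    (f : Polynomial L) (hf0 : f.coeff 0 = 1) (hfw : ∀ j, w < j → f.coeff j = 0)
    (s : ZMod n → L) (i : ℕ) (hi : 1 ≤ i) :
    aeval (Sum.elim (fun j : Fin w => f.coeff (j.val + 1)) s) (newtonPoly n w i) =
      PowerSeries.coeff i ((f : PowerSeries L) * syndromeSeries s) +
        (Polynomial.X * Polynomial.derivative f).coeff i := by
  have hS : ∀ k, aeval (Sum.elim (fun j : Fin w => f.coeff (j.val + 1)) s) (Sv n w k)
      = s (k : ZMod n) := fun k => by simp [Sv]
  have hσ : ∀ j, 1 ≤ j → aeval (Sum.elim (fun j : Fin w => f.coeff (j.val + 1)) s) (sigv n w j)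
      = f.coeff j := fun j hj => by
    by_cases h : j ≤ w
    · simp [sigv, hj, h]
    · simp [sigv, h, hfw j (by omega)]
  obtain ⟨i, rfl⟩ : ∃ k, i = k + 1 := ⟨i - 1, by omega⟩
  have hprod : PowerSeries.coeff (i + 1) ((f : PowerSeries L) * syndromeSeries s) =
      s ((i + 1 : ℕ) : ZMod n) +
        ∑ j ∈ Finset.Ico 1 (i + 1), f.coeff j * s ((i + 1 - j : ℕ) : ZMod n) := by
    rw [PowerSeries.coeff_mul, Finset.Nat.sum_antidiagonal_eq_sum_range_succ
      (fun a b => PowerSeries.coeff a (f : PowerSeries L) * PowerSeries.coeff b (syndromeSeries s)),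
      Finset.sum_range_succ, Finset.range_eq_Ico, Finset.sum_eq_sum_Ico_succ_bot (by omega)]
    simp only [syndromeSeries, PowerSeries.coeff_mk, Polynomial.coeff_coe, hf0]
    simp only [Nat.sub_self, if_true, mul_zero, add_zero, one_mul, Nat.sub_zero, zero_add]
    rw [if_neg (by omega)]
    congr 1
    refine Finset.sum_congr rfl fun j hj => ?_
    rw [Finset.mem_Ico] at hj
    rw [if_neg (by omega)]
  have hder : (Polynomial.X * Polynomial.derivative f).coeff (i + 1) =
      ((i + 1 : ℕ) : L) * f.coeff (i + 1) := by
    rw [Polynomial.coeff_X_mul, Polynomial.coeff_derivative]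
    push_cast; ring
  rw [hprod, hder, newtonPoly]
  split_ifs with h
  · simp only [map_add, map_sum, map_mul, hS, map_natCast, hσ (i + 1) hi]
    congr 2
    refine Finset.sum_congr rfl fun j hj => ?_
    rw [hσ j (Finset.mem_Ico.1 hj).1]
  · simp only [map_add, map_sum, map_mul, hS, hfw (i + 1) (by omega), mul_zero, add_zero]
    congr 1
    have : Finset.Icc 1 w ⊆ Finset.Ico 1 (i + 1) := fun j hj => by
      rw [Finset.mem_Icc] at hj; rw [Finset.mem_Ico]; omega
    rw [← Finset.sum_subset this]
    · refine Finset.sum_congr rfl fun j hj => ?_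
      rw [hσ j (Finset.mem_Icc.1 hj).1]
    · intro j hj hj'
      rw [Finset.mem_Ico] at hj
      rw [Finset.mem_Icc] at hj'
      rw [hfw j (by omega), zero_mul]

/-- The identities beyond index `n + w` repeat earlier ones, so the Newton ideal contains
all of them. -/
lemma newtonPoly_mem (n w : ℕ) [NeZero n] (i : ℕ) (hi : 1 ≤ i) :
    newtonPoly n w i ∈ newtonIdeal n w := by
  induction i using Nat.strong_induction_on with
  | _ i ih =>
    by_cases h : i ≤ n + w
    · exact Ideal.subset_span ⟨i, ⟨hi, h⟩, rfl⟩
    · have hn : 0 < n := NeZero.pos n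
      have hp : newtonPoly n w i = newtonPoly n w (i - n) := by
        have hS : ∀ j, j ≤ w → Sv n w (i - j) = Sv n w (i - n - j) := fun j hj => by
          have : i - j = (i - n - j) + n := by omega
          rw [this]; simp [Sv]
        rw [newtonPoly, newtonPoly, if_neg (by omega), if_neg (by omega)]
        congr 1
        · simpa using hS 0 (by omega)
        · refine Finset.sum_congr rfl fun j hj => ?_
          rw [hS j (Finset.mem_Icc.1 hj).2]
      rw [hp]
      exact ih _ (by omega) (by omega)

/-- The zeros `(σ, S)` of the Newton ideal are the solutions of the single power series identity
`f(Z) S(Z) = Z f'(Z)`. -/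
lemma mem_zeroLocus_newtonIdeal_iff {L : Type*} [Field L] [Algebra F2 L] [CharP L 2] {n w : ℕ}
    [NeZero n] (f : Polynomial L) (hf0 : f.coeff 0 = 1) (hfw : ∀ j, w < j → f.coeff j = 0)
    (s : ZMod n → L) :
    Sum.elim (fun j : Fin w => f.coeff (j.val + 1)) s ∈ zeroLocus L (newtonIdeal n w) ↔
      (f : PowerSeries L) * syndromeSeries s =
        ((Polynomial.X * Polynomial.derivative f : Polynomial L) : PowerSeries L) := by
  constructor
  · intro h
    ext i
    rcases Nat.eq_zero_or_pos i with rfl | hi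
    · simp [syndromeSeries]
    · have := h _ (newtonPoly_mem n w i hi)
      rw [aeval_newtonPoly f hf0 hfw s i hi, CharTwo.add_eq_zero] at this
      rw [this, Polynomial.coeff_coe]
  · intro h
    rw [newtonIdeal, zeroLocus_span]
    rintro _ ⟨i, hi, rfl⟩
    rw [aeval_newtonPoly f hf0 hfw s i hi.1, CharTwo.add_eq_zero, h, Polynomial.coeff_coe]

/-! ### Root multiplicities of the locator polynomial -/

/-- The polynomial `∑_{i=1}^{n} S_i Z^i`, a single period of the syndrome series. -/
noncomputable def periodPoly {L : Type*} [Field L] {n : ℕ} (s : ZMod n → L) : Polynomial L :=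
  ∑ i ∈ Finset.Icc 1 n, Polynomial.C (s (i : ZMod n)) * Polynomial.X ^ i

/-- Multiplying by `1 + Z^n = 1 - Z^n` cuts the periodic series down to one period. -/
lemma syndromeSeries_mul {L : Type*} [Field L] [CharP L 2] {n : ℕ} [NeZero n] (s : ZMod n → L) :
    syndromeSeries s * ((Polynomial.X ^ n + 1 : Polynomial L) : PowerSeries L) =
      (periodPoly s : PowerSeries L) := by
  have hn : 0 < n := NeZero.pos n
  ext i
  have hT : (periodPoly s).coeff i = if 1 ≤ i ∧ i ≤ n then s (i : ZMod n) else 0 := by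
    simp [periodPoly, Polynomial.finsetSum_coeff, Polynomial.coeff_X_pow]
  rw [Polynomial.coeff_coe, hT, Polynomial.coe_add, Polynomial.coe_pow, Polynomial.coe_X,
    Polynomial.coe_one, mul_add, mul_one, map_add, PowerSeries.coeff_mul_X_pow']
  simp only [syndromeSeries, PowerSeries.coeff_mk]
  rcases lt_trichotomy i n with h | rfl | h
  · rw [if_neg (by omega), zero_add]
    by_cases h0 : i = 0
    · simp [h0]
    · rw [if_neg h0, if_pos (by omega)]
  · simp [hn.ne', Nat.one_le_iff_ne_zero]
  · rw [if_pos h.le, if_neg (by omega), if_neg (by omega), if_neg (by omega)]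
    have : ((i - n : ℕ) : ZMod n) = i := by rw [Nat.cast_sub h.le]; simp
    rw [this, CharTwo.add_self_eq_zero]

/-- If `f T = Z f' (1 + Z^n)`, the value of `T` at an `n`-th root of unity `β` is the multiplicity
of `β` as a root of `f`: up to the factor `β · (Z^n)'(β) = n = 1` it is the residue of the
logarithmic derivative `f' / f`. -/
lemma eval_eq_rootMultiplicity {L : Type*} [Field L] [CharP L 2] {n : ℕ} (hodd : Odd n)
    (f T : Polynomial L) (hf : f ≠ 0)
    (h : f * T = Polynomial.X * Polynomial.derivative f * (Polynomial.X ^ n + 1))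
    (β : L) (hβ : β ^ n = 1) : T.eval β = (f.rootMultiplicity β : L) := by
  obtain ⟨g, hg, hgβ⟩ := f.exists_eq_pow_rootMultiplicity_mul_and_not_dvd hf β
  set m := f.rootMultiplicity β with hm
  rw [Polynomial.dvd_iff_isRoot, Polynomial.IsRoot.def] at hgβ
  have hroot : (Polynomial.X ^ n + 1 : Polynomial L).IsRoot β := by
    simp [hβ, CharTwo.add_self_eq_zero]
  obtain ⟨q, hq⟩ := Polynomial.dvd_iff_isRoot.2 hroot
  have hnL : (n : L) = 1 := natCast_of_odd hodd
  have hqβ : β * q.eval β = 1 := by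
    have hd := congrArg (fun r => β * (Polynomial.derivative r).eval β) hq
    have hn : n = (n - 1) + 1 := by have := hodd.pos; omega
    have hp : β * β ^ (n - 1) = 1 := by rw [← pow_succ', ← hn, hβ]
    simpa [Polynomial.derivative_X_pow, hnL, hp] using hd.symm
  have hXf : (Polynomial.X - Polynomial.C β) * Polynomial.derivative f =
      (Polynomial.X - Polynomial.C β) ^ m *
        (Polynomial.C (m : L) * g + (Polynomial.X - Polynomial.C β) * Polynomial.derivative g) := by
    rw [hg, Polynomial.derivative_mul, Polynomial.derivative_pow]
    cases m with
    | zero => simp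
    | succ k => simp; ring
  have hcancel : g * T = Polynomial.X * q * (Polynomial.C (m : L) * g +
      (Polynomial.X - Polynomial.C β) * Polynomial.derivative g) := by
    have hne : (Polynomial.X - Polynomial.C β) ^ m ≠ 0 :=
      pow_ne_zero _ (Polynomial.X_sub_C_ne_zero β)
    apply mul_left_cancel₀ hne
    calc _ = f * T := by rw [hg]; ring
      _ = Polynomial.X * q * ((Polynomial.X - Polynomial.C β) * Polynomial.derivative f) := by
        rw [h, hq]; ring
      _ = _ := by rw [hXf]; ring
  have he := congrArg (Polynomial.eval β) hcancel
  simp only [Polynomial.eval_mul, Polynomial.eval_add, Polynomial.eval_X, Polynomial.eval_C,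
    Polynomial.eval_sub, sub_self, zero_mul, add_zero] at he
  rw [hqβ, one_mul, mul_comm] at he
  exact mul_right_cancel₀ hgβ he

/-! ### Fourier inversion -/

lemma sum_Icc_natCast {M : Type*} [AddCommMonoid M] {n : ℕ} [NeZero n] (g : ZMod n → M) :
    ∑ i ∈ Finset.Icc 1 n, g (i : ZMod n) = ∑ a : ZMod n, g a := by
  have hn : 0 < n := NeZero.pos n
  refine Finset.sum_nbij (fun i : ℕ => (i : ZMod n)) (by simp) ?_ ?_ (by simp)
  · intro a ha b hb hab
    simp only [Finset.coe_Icc, Set.mem_Icc] at ha hb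
    have hab' := (ZMod.natCast_eq_natCast_iff' a b n).1 hab
    rcases ha.2.lt_or_eq with h1 | h1 <;> rcases hb.2.lt_or_eq with h2 | h2
    · rwa [Nat.mod_eq_of_lt h1, Nat.mod_eq_of_lt h2] at hab'
    · rw [Nat.mod_eq_of_lt h1, h2, Nat.mod_self] at hab'; omega
    · rw [Nat.mod_eq_of_lt h2, h1, Nat.mod_self] at hab'; omega
    · omega
  · intro a _
    by_cases h : a = 0
    · exact ⟨n, by simp; omega, by simp [h]⟩
    · refine ⟨a.val, ?_, by simp⟩
      have := ZMod.val_lt a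
      have := (ZMod.val_pos).2 h
      simp; omega

lemma sum_zmod_val {M : Type*} [AddCommMonoid M] {n : ℕ} [NeZero n] (g : ℕ → M) :
    ∑ a : ZMod n, g a.val = ∑ i ∈ Finset.range n, g i := by
  refine Finset.sum_nbij (fun a : ZMod n => a.val) (by simp [ZMod.val_lt]) ?_ ?_ (by simp)
  · intro a _ b _ hab
    exact ZMod.val_injective n hab
  · intro i hi
    simp only [Finset.coe_range, Set.mem_Iio] at hi
    exact ⟨(i : ZMod n), by simp, ZMod.val_cast_of_lt hi⟩

lemma pow_natCast_val {L : Type*} [Field L] {n : ℕ} {x : L} (hx : x ^ n = 1) (i : ℕ) :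
    x ^ (i : ZMod n).val = x ^ i := by
  rw [ZMod.val_natCast, ← pow_eq_pow_mod i hx]

instance charP_K : CharP K 2 := charP_of_injective_algebraMap (algebraMap F2 K).injective 2

/-- Fourier inversion: `S` is the transform of the word `e_k = ∑_{i=1}^{n} S_i α^(-ik)`. The usual
factor `1/n` is `1` because `n` is odd. -/
lemma ft_inverse {n : ℕ} [NeZero n] (hodd : Odd n) (α : K) (hα : IsPrimitiveRoot α n)
    (s : ZMod n → K) :
    ft α (fun k => (periodPoly s).eval ((α ^ k.val)⁻¹)) = s := by
  have hα0 : α ≠ 0 := hα.ne_zero (NeZero.ne n)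
  have hnL : (n : K) = 1 := natCast_of_odd hodd
  have horth : ∀ i a : ZMod n, ∑ k : ZMod n, (α ^ i.val * (α ^ a.val)⁻¹) ^ k.val =
      if a = i then 1 else 0 := by
    intro i a
    rw [sum_zmod_val (fun k => (α ^ i.val * (α ^ a.val)⁻¹) ^ k)]
    split_ifs with h
    · subst h
      rw [mul_inv_cancel₀ (pow_ne_zero _ hα0)]
      simp [hnL]
    · have hne : α ^ i.val * (α ^ a.val)⁻¹ - 1 ≠ 0 := by
        intro h0
        rw [sub_eq_zero, mul_inv_eq_one₀ (pow_ne_zero _ hα0)] at h0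
        exact h (ZMod.val_injective n (hα.pow_inj (ZMod.val_lt _) (ZMod.val_lt _) h0)).symm
      apply mul_left_cancel₀ hne
      rw [mul_geom_sum, mul_pow, inv_pow, ← pow_mul, ← pow_mul, mul_comm i.val, mul_comm a.val,
        pow_mul, pow_mul, hα.pow_eq_one]
      simp
  have hT : ∀ k : ZMod n, (periodPoly s).eval ((α ^ k.val)⁻¹) =
      ∑ a : ZMod n, s a * ((α ^ k.val)⁻¹) ^ a.val := by
    intro k
    rw [← sum_Icc_natCast (fun a : ZMod n => s a * ((α ^ k.val)⁻¹) ^ a.val), periodPoly,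
      Polynomial.eval_finsetSum]
    refine Finset.sum_congr rfl fun i _ => ?_
    have h1 : ((α ^ k.val)⁻¹) ^ n = 1 := by
      rw [inv_pow, ← pow_mul, mul_comm, pow_mul, hα.pow_eq_one, one_pow, inv_one]
    rw [pow_natCast_val h1]
    simp
  funext i
  calc ft α (fun k => (periodPoly s).eval ((α ^ k.val)⁻¹)) i
      = ∑ k : ZMod n, ∑ a : ZMod n, s a * (α ^ i.val * (α ^ a.val)⁻¹) ^ k.val := by
        rw [ft]
        refine Finset.sum_congr rfl fun k _ => ?_
        rw [hT, Finset.sum_mul]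
        refine Finset.sum_congr rfl fun a _ => ?_
        rw [mul_pow, inv_pow, inv_pow, ← pow_mul, ← pow_mul, ← pow_mul, mul_comm k.val a.val]
        ring
    _ = ∑ a : ZMod n, s a * ∑ k : ZMod n, (α ^ i.val * (α ^ a.val)⁻¹) ^ k.val := by
        rw [Finset.sum_comm]
        simp only [Finset.mul_sum]
    _ = s i := by simp [horth]

/-! ### From zeros of the Newton ideal to binary words -/

/-- The syndrome part of every zero of the Newton ideal is the transform of a binary word of weight
at most `w`. -/
lemma exists_word_of_mem_zeroLocus {n w : ℕ} [NeZero n] (hodd : Odd n)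
    (α : K) (hα : IsPrimitiveRoot α n) (x : Fin w ⊕ ZMod n → K)
    (hx : x ∈ zeroLocus K (newtonIdeal n w)) :
    ∃ e : ZMod n → K, isBinary e ∧ wt e ≤ w ∧ ft α e = fun i => x (Sum.inr i) := by
  classical
  have hα0 : α ≠ 0 := hα.ne_zero (NeZero.ne n)
  set f : Polynomial K := locator fun j : Fin w => x (Sum.inl j) with hfdef
  set s : ZMod n → K := fun i => x (Sum.inr i) with hs
  have hxe : x = Sum.elim (fun j : Fin w => f.coeff (j.val + 1)) s := by
    funext t
    cases t with
    | inl j => simp [hfdef, locator_coeff_succ]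
    | inr i => rfl
  have hf0 : f.coeff 0 = 1 := locator_coeff_zero _
  have hfw : ∀ j, w < j → f.coeff j = 0 := locator_coeff_of_lt _
  rw [hxe, mem_zeroLocus_newtonIdeal_iff f hf0 hfw] at hx
  have hf : f ≠ 0 := by
    intro h; simp [h] at hf0
  have hfT : f * periodPoly s =
      Polynomial.X * Polynomial.derivative f * (Polynomial.X ^ n + 1) := by
    apply Polynomial.coe_injective K
    rw [Polynomial.coe_mul, ← syndromeSeries_mul, ← mul_assoc, hx, ← Polynomial.coe_mul]
  have hβ : ∀ k : ZMod n, ((α ^ k.val)⁻¹) ^ n = 1 := fun k => by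
    rw [inv_pow, ← pow_mul, mul_comm, pow_mul, hα.pow_eq_one, one_pow, inv_one]
  have hval := fun k : ZMod n => eval_eq_rootMultiplicity hodd f _ hf hfT _ (hβ k)
  refine ⟨fun k => (periodPoly s).eval ((α ^ k.val)⁻¹), ?_, ?_, ft_inverse hodd α hα s⟩
  · intro k
    simp only [hval]
    rcases Nat.even_or_odd (f.rootMultiplicity (α ^ k.val)⁻¹) with h | h
    -- the multiplicity is read in characteristic `2`
    · exact Or.inl ((CharP.cast_eq_zero_iff K 2 _).2 h.two_dvd)
    · exact Or.inr (natCast_of_odd h)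
  · have hinj : Function.Injective fun k : ZMod n => (α ^ k.val)⁻¹ := fun a b hab =>
      ZMod.val_injective n (hα.pow_inj (ZMod.val_lt _) (ZMod.val_lt _) (inv_injective hab))
    have hsub : (fun k : ZMod n => (α ^ k.val)⁻¹) ''
        {k | (periodPoly s).eval ((α ^ k.val)⁻¹) ≠ 0} ⊆ (f.roots.toFinset : Set K) := by
      rintro _ ⟨k, hk, rfl⟩
      rw [Set.mem_ofPred_eq, hval] at hk
      have hpos : 0 < f.rootMultiplicity (α ^ k.val)⁻¹ := by
        refine Nat.pos_of_ne_zero fun h => hk ?_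
        rw [h, Nat.cast_zero]
      simpa [hf] using (Polynomial.rootMultiplicity_pos hf).1 hpos
    calc wt (fun k : ZMod n => (periodPoly s).eval ((α ^ k.val)⁻¹))
        = ((fun k : ZMod n => (α ^ k.val)⁻¹) ''
            {k | (periodPoly s).eval ((α ^ k.val)⁻¹) ≠ 0}).ncard :=
          (Set.ncard_image_of_injective _ hinj).symm
      _ ≤ (f.roots.toFinset : Set K).ncard := Set.ncard_le_ncard hsub (Finset.finite_toSet _)
      _ ≤ f.natDegree := by
          rw [Set.ncard_coe_finset]
          exact (Multiset.toFinset_card_le _).trans (Polynomial.card_roots' f)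
      _ ≤ w := Polynomial.natDegree_le_iff_coeff_eq_zero.2 hfw

/-! ### From binary words to zeros of the Newton ideal -/

/-- The product `f = ∏_{k ∈ A} (1 + a_k Z)` and the power sums `S_i = ∑_{k ∈ A} a_k^i` satisfy
`f(Z) S(Z) = Z f'(Z)`. -/
lemma prod_mul_powerSum {L ι : Type*} [Field L] [CharP L 2] [DecidableEq ι] (a : ι → L)
    (A : Finset ι) :
    ((∏ k ∈ A, (1 + Polynomial.C (a k) * Polynomial.X) : Polynomial L) : PowerSeries L) *
        PowerSeries.mk (fun i => if i = 0 then 0 else ∑ k ∈ A, a k ^ i) =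
      ((Polynomial.X * Polynomial.derivative
        (∏ k ∈ A, (1 + Polynomial.C (a k) * Polynomial.X)) : Polynomial L) : PowerSeries L) := by
  induction A using Finset.induction_on with
  | empty =>
    ext i
    simp
  | insert b A hb ih =>
    have hsplit : PowerSeries.mk (fun i => if i = 0 then 0 else ∑ k ∈ insert b A, a k ^ i) =
        PowerSeries.mk (fun i => if i = 0 then 0 else a b ^ i) +
          PowerSeries.mk (fun i => if i = 0 then 0 else ∑ k ∈ A, a k ^ i) := by
      ext i
      simp only [PowerSeries.coeff_mk, map_add, Finset.sum_insert hb]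
      split_ifs <;> simp
    -- geometric series: `(1 + aZ) ∑_{i ≥ 1} a^i Z^i = aZ`
    have hgeom : ((1 + Polynomial.C (a b) * Polynomial.X : Polynomial L) : PowerSeries L) *
        PowerSeries.mk (fun i => if i = 0 then 0 else a b ^ i) =
          ((Polynomial.C (a b) * Polynomial.X : Polynomial L) : PowerSeries L) := by
      ext i
      rw [Polynomial.coeff_coe, Polynomial.coe_add, Polynomial.coe_one, Polynomial.coe_mul,
        Polynomial.coe_C, Polynomial.coe_X, add_mul, one_mul, map_add, mul_assoc,
        PowerSeries.coeff_C_mul]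
      rcases i with _ | _ | i
      · simp
      · simp [PowerSeries.coeff_succ_X_mul]
      · simp only [PowerSeries.coeff_succ_X_mul, PowerSeries.coeff_mk, Polynomial.coeff_C_mul,
          Polynomial.coeff_X]
        rw [if_neg (by omega), if_neg (by omega), if_neg (by omega), ← pow_succ',
          CharTwo.add_self_eq_zero, mul_zero]
    rw [Finset.prod_insert hb, hsplit]
    set f := ∏ k ∈ A, (1 + Polynomial.C (a k) * Polynomial.X) with hf
    have hd : Polynomial.X * Polynomial.derivative ((1 + Polynomial.C (a b) * Polynomial.X) * f) =
        f * (Polynomial.C (a b) * Polynomial.X) + (1 + Polynomial.C (a b) * Polynomial.X) *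
          (Polynomial.X * Polynomial.derivative f) := by
      simp [Polynomial.derivative_mul]; ring
    rw [hd, Polynomial.coe_add, Polynomial.coe_mul f, ← hgeom,
      Polynomial.coe_mul _ (Polynomial.X * Polynomial.derivative f), ← ih, Polynomial.coe_mul]
    ring

/-- The transform of a binary word of weight at most `w` is the syndrome part of a zero of the
Newton ideal. -/
lemma exists_mem_zeroLocus_of_word {n w : ℕ} [NeZero n] (α : K) (hα : IsPrimitiveRoot α n)
    (e : ZMod n → K) (he : isBinary e) (hw : wt e ≤ w) :
    ∃ c : Fin w → K, Sum.elim c (ft α e) ∈ zeroLocus K (newtonIdeal n w) := by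
  classical
  set A : Finset (ZMod n) := Finset.univ.filter fun k => e k ≠ 0 with hA
  have hcard : A.card ≤ w := by
    rw [wt, ← Set.ncard_coe_finset A] at *
    simpa [hA] using hw
  set f : Polynomial K := ∏ k ∈ A, (1 + Polynomial.C (α ^ k.val) * Polynomial.X) with hf
  have hf0 : f.coeff 0 = 1 := by
    rw [Polynomial.coeff_zero_eq_eval_zero, hf, Polynomial.eval_prod]
    simp
  have hdeg : f.natDegree ≤ w := by
    refine (Polynomial.natDegree_prod_le _ _).trans (le_trans ?_ hcard)
    rw [Finset.card_eq_sum_ones]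
    refine Finset.sum_le_sum fun k _ => ?_
    compute_degree
  have hfw : ∀ j, w < j → f.coeff j = 0 := Polynomial.natDegree_le_iff_coeff_eq_zero.1 hdeg
  refine ⟨fun j => f.coeff (j.val + 1), ?_⟩
  rw [mem_zeroLocus_newtonIdeal_iff f hf0 hfw, hf, ← prod_mul_powerSum]
  congr 1
  ext i
  simp only [syndromeSeries, PowerSeries.coeff_mk]
  split_ifs with hi
  · rfl
  rw [ft, hA, Finset.sum_filter]
  refine Finset.sum_congr rfl fun k _ => ?_
  rw [mul_comm (i : ZMod n).val, pow_mul, pow_natCast_val (x := α ^ k.val) (by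
    rw [← pow_mul, mul_comm, pow_mul, hα.pow_eq_one, one_pow])]
  rcases he k with h | h <;> simp [h]

/-- if `I_{N,w}` is radical, then a polynomial `p` in the `S`-variables only
belongs to the elimination ideal `I_{N,w} ∩ F₂[S₀,…,S_{n−1}]` if and only if it vanishes
on the Fourier transforms of all binary words of weight at most `w`. -/
theorem mem_newton_elimination_iff_vanishes_on_syndromes (n m w : ℕ) [NeZero n] (hodd : Odd n) (hm : 0 < m)
    (hdvd : n ∣ 2 ^ m - 1) (hw1 : 1 ≤ w) (hwn : w ≤ n)
    (α : K) (hα : IsPrimitiveRoot α n)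
    (hrad : (newtonIdeal n w).IsRadical)
    (p : MvPolynomial (ZMod n) F2) :
    MvPolynomial.rename (Sum.inr : ZMod n → Fin w ⊕ ZMod n) p ∈ newtonIdeal n w ↔
      ∀ e : ZMod n → K, isBinary e → wt e ≤ w →
        MvPolynomial.aeval (fun i : ZMod n => ft α e i) p = 0 := by
  have hI : newtonIdeal n w = vanishingIdeal F2 (zeroLocus K (newtonIdeal n w)) := by
    rw [vanishingIdeal_zeroLocus_eq_radical, hrad.radical]
  rw [hI, mem_vanishingIdeal_iff]
  constructor
  · intro h e he hw
    obtain ⟨c, hc⟩ := exists_mem_zeroLocus_of_word α hα e he hw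
    have := h _ hc
    rwa [aeval_rename, Sum.elim_comp_inr] at this
  · intro h x hx
    obtain ⟨e, he, hw, hft⟩ := exists_word_of_mem_zeroLocus hodd α hα x hx
    have := h e he hw
    rw [aeval_rename]
    rwa [show (fun i => ft α e i) = x ∘ Sum.inr from hft] at this
end

section
/- Let Q ⊆ {0,…,n−1} be a defining set, C the cyclic code with defining set Q, d its minimum distance, and t = ⌊(d−1)/2⌋. Then for every binary word e ∈ F_2^n of weight w with 1 ≤ w ≤ t and every i ∈ {1,…,w}, there exist polynomials p_i, q_i ∈ F_2[S_Q] such that p_i·σ_i + q_i ∈ I^0_{N,w} and p_i(S_{Q,e}) ≠ 0. -/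
/-!
A binary word `e` of weight `w` gives a zero of `I⁰_{N,w}` (`pt_mem`), with locator polynomial
`σ = ∏ (1 - Xⱼ Z)` and syndromes the power sums of the `Xⱼ`. Conversely, at any zero of the Newton
ideal the identities amount to the key equation `T σ = -Z σ' (1 - Zⁿ)`, where
`T = S₁ Z + ⋯ + S_n Zⁿ` (`key_equation`). Comparing multiplicities at an `n`-th root of unity `y`
shows that `T(y)` is the multiplicity of `y` as a root of `σ`, read in `F₂` (`eval_synPoly`). So the
`S_i` are the Fourier transform of a binary word supported on roots of `σ`, hence of weight at most
`w`. If its syndromes on `Q` are those of `e`, the two words differ by a codeword of weight at most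
`2w < d` and coincide. Then `σ` has degree at most `w`, value `1` at `0`, and vanishes at the `w`
inverse locations of `e`, so it is the locator of `e` (`unique_sigma`).

Hence `σ_i` is determined at all zeros with the syndromes of `e` on `Q`. By Galois theory its value
there is `q(S_{Q,e})` for some `q ∈ F₂[S_Q]` (`exists_aeval_eq`). As all elements of `R / I⁰_{N,w}`
satisfy `x ^ (2 ^ m) = x`, the element `σ_i + q` dies in the localization of `R / I⁰_{N,w}` at the
`p ∈ F₂[S_Q]` with `p(S_{Q,e}) ≠ 0`, as a surviving element would remain nonzero at a zero with the
same syndromes on `Q` (`exists_formula`).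
-/

open MvPolynomial

noncomputable section

/-- The ideal `I⁰_{N,w} = I_{N,w} + ⟨field equations⟩`, where the field equations are
`v^(2^m) + v` (equivalently `v^(2^m) - v`) for every variable `v` among the `σ_i`'s
and the `S_i`'s. -/
def newtonIdeal0 (n m w : ℕ) : Ideal (MvPolynomial (Fin w ⊕ ZMod n) F2) :=
  newtonIdeal n w +
    Ideal.span (Set.range fun v : Fin w ⊕ ZMod n => X v ^ (2 ^ m) + X v)

end

/-! ### Newton identities and generating series -/

/-- The locator polynomial `1 + ∑ₖ σₖ Zᵏ` of a point `g` of the affine space with coordinates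
`σ₁,…,σ_w, S₀,…,S_{n−1}`. -/
noncomputable def loc {n w : ℕ} (g : Fin w ⊕ ZMod n → K) : Polynomial K :=
  1 + ∑ k : Fin w, Polynomial.C (g (Sum.inl k)) * Polynomial.X ^ (k.val + 1)

/-- The power series `∑_{i ≥ 1} S_i Zⁱ` of a point, with the index of `S` read modulo `n`. -/
noncomputable def syn {n w : ℕ} (g : Fin w ⊕ ZMod n → K) : PowerSeries K :=
  PowerSeries.mk fun i => if i = 0 then 0 else g (Sum.inr (i : ZMod n))

lemma loc_coeff_zero {n w : ℕ} (g : Fin w ⊕ ZMod n → K) : (loc g).coeff 0 = 1 := by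
  simp [loc]

lemma loc_coeff_succ {n w : ℕ} (g : Fin w ⊕ ZMod n → K) (k : Fin w) :
    (loc g).coeff (k.val + 1) = g (Sum.inl k) := by
  simp only [loc, Polynomial.coeff_add, Polynomial.coeff_one, Polynomial.finsetSum_coeff,
    Polynomial.coeff_C_mul, Polynomial.coeff_X_pow]
  rw [Finset.sum_eq_single k]
  · simp
  · intro b _ hb
    have : k.val ≠ b.val := fun h => hb (Fin.ext h.symm)
    simp [this]
  · simp

lemma loc_natDegree_le {n w : ℕ} (g : Fin w ⊕ ZMod n → K) : (loc g).natDegree ≤ w := by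
  unfold loc
  refine (Polynomial.natDegree_add_le _ _).trans (max_le (by simp) ?_)
  refine Polynomial.natDegree_sum_le_of_forall_le _ _ fun k _ => ?_
  exact (Polynomial.natDegree_C_mul_X_pow_le _ _).trans k.2

lemma aeval_sigv {n w : ℕ} (g : Fin w ⊕ ZMod n → K) {j : ℕ} (hj : 1 ≤ j) :
    aeval g (sigv n w j) = (loc g).coeff j := by
  unfold sigv
  split_ifs with h
  · obtain ⟨k, rfl⟩ : ∃ k, j = k + 1 := ⟨j - 1, by omega⟩
    have := loc_coeff_succ g ⟨k, by omega⟩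
    simpa using this.symm
  · rw [map_zero, Polynomial.coeff_eq_zero_of_natDegree_lt]
    have := loc_natDegree_le g
    omega

/-- The values at a point of the Newton identity polynomials are the coefficients of
`S·σ + Z·σ'`, where `σ` is the locator polynomial. -/
lemma aeval_newtonPoly_s6 {n w : ℕ} (g : Fin w ⊕ ZMod n → K) {i : ℕ} (hi : 1 ≤ i) :
    aeval g (newtonPoly n w i) = PowerSeries.coeff i (syn g * (loc g : PowerSeries K)
      + ((Polynomial.X * Polynomial.derivative (loc g) : Polynomial K) : PowerSeries K)) := by
  obtain ⟨i, rfl⟩ : ∃ k, i = k + 1 := ⟨i - 1, by omega⟩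
  have hS : ∀ j, aeval g (Sv n w j) = g (Sum.inr (j : ZMod n)) := fun j => by simp [Sv]
  have key : PowerSeries.coeff (i + 1) (syn g * (loc g : PowerSeries K)) =
      aeval g (Sv n w (i + 1)) +
        ∑ j ∈ Finset.Ico 1 (i + 1), (loc g).coeff j * aeval g (Sv n w (i + 1 - j)) := by
    rw [mul_comm, PowerSeries.coeff_mul, Finset.Nat.sum_antidiagonal_eq_sum_range_succ_mk,
      Finset.sum_range_succ, Finset.range_eq_Ico,
      Finset.sum_eq_sum_Ico_succ_bot (by omega : 0 < i + 1)]
    simp only [Polynomial.coeff_coe, syn, PowerSeries.coeff_mk, hS, loc_coeff_zero]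
    simp only [Nat.sub_zero, Nat.sub_self, if_true, mul_zero, add_zero, one_mul]
    rw [if_neg (by omega)]
    congr 1
    refine Finset.sum_congr rfl fun j hj => ?_
    rw [Finset.mem_Ico] at hj
    rw [if_neg (by omega)]
  have hder : PowerSeries.coeff (i + 1)
      ((Polynomial.X * Polynomial.derivative (loc g) : Polynomial K) : PowerSeries K)
      = ((i + 1 : ℕ) : K) * (loc g).coeff (i + 1) := by
    rw [Polynomial.coeff_coe, Polynomial.coeff_X_mul, Polynomial.coeff_derivative]
    push_cast; ring
  rw [map_add, key, hder]
  unfold newtonPoly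
  split_ifs with h
  · simp only [map_add, map_mul, map_sum, map_natCast]
    rw [aeval_sigv g (by omega)]
    congr 2
    refine Finset.sum_congr rfl fun j hj => ?_
    rw [aeval_sigv g (Finset.mem_Ico.1 hj).1]
  · have h0 : ∀ j, w < j → (loc g).coeff j = 0 := fun j hj =>
      Polynomial.coeff_eq_zero_of_natDegree_lt ((loc_natDegree_le g).trans_lt hj)
    rw [h0 (i + 1) (by omega)]
    simp only [map_add, map_mul, map_sum, mul_zero, add_zero]
    congr 1
    rw [← Finset.sum_subset (s₁ := Finset.Icc 1 w) (s₂ := Finset.Ico 1 (i + 1))]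
    · refine Finset.sum_congr rfl fun j hj => ?_
      rw [aeval_sigv g (Finset.mem_Icc.1 hj).1]
    · intro j; simp only [Finset.mem_Icc, Finset.mem_Ico]; omega
    · intro j hj hj'
      simp only [Finset.mem_Icc, Finset.mem_Ico] at hj hj'
      rw [h0 j (by omega), zero_mul]

/-! ### The zero attached to a binary word -/

open Classical in
/-- The support of a word. -/
noncomputable def supp {n : ℕ} [NeZero n] (e : ZMod n → K) : Finset (ZMod n) :=
  Finset.univ.filter fun j => e j ≠ 0

lemma mem_supp {n : ℕ} [NeZero n] (e : ZMod n → K) (j : ZMod n) : j ∈ supp e ↔ e j ≠ 0 := by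
  simp [supp]

lemma wt_eq {n : ℕ} [NeZero n] (e : ZMod n → K) : wt e = (supp e).card := by
  rw [wt, ← Set.ncard_coe_finset]
  congr 1
  ext j
  simp [mem_supp]

/-- The error locator polynomial `∏ (1 + αʲ Z)` of a word, `j` ranging over its support. -/
noncomputable def elp {n : ℕ} [NeZero n] (α : K) (e : ZMod n → K) : Polynomial K :=
  ∏ j ∈ supp e, (1 + Polynomial.C (α ^ j.val) * Polynomial.X)

/-- The point attached to a word `e`: its `σ`-coordinates are the coefficients of the locator
polynomial of `e`, its `S`-coordinates are the Fourier transform of `e`. -/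
noncomputable def pt {n : ℕ} [NeZero n] (w : ℕ) (α : K) (e : ZMod n → K) :
    Fin w ⊕ ZMod n → K :=
  Sum.elim (fun k => (elp α e).coeff (k.val + 1)) (ft α e)

lemma elp_coeff_zero {n : ℕ} [NeZero n] (α : K) (e : ZMod n → K) : (elp α e).coeff 0 = 1 := by
  rw [Polynomial.coeff_zero_eq_eval_zero, elp, Polynomial.eval_prod]
  simp

lemma elp_natDegree_le {n : ℕ} [NeZero n] (α : K) (e : ZMod n → K) :
    (elp α e).natDegree ≤ wt e := by
  rw [wt_eq, elp]
  refine (Polynomial.natDegree_prod_le _ _).trans ?_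
  rw [Finset.card_eq_sum_ones]
  refine Finset.sum_le_sum fun j _ => ?_
  compute_degree

lemma loc_pt {n : ℕ} [NeZero n] {w : ℕ} (α : K) (e : ZMod n → K) (hwe : wt e = w) :
    loc (pt w α e) = elp α e := by
  ext k
  rcases Nat.eq_zero_or_pos k with rfl | hk
  · rw [loc_coeff_zero, elp_coeff_zero]
  by_cases hkw : k ≤ w
  · obtain ⟨k, rfl⟩ : ∃ l, k = l + 1 := ⟨k - 1, by omega⟩
    exact loc_coeff_succ (pt w α e) ⟨k, hkw⟩
  · rw [Polynomial.coeff_eq_zero_of_natDegree_lt, Polynomial.coeff_eq_zero_of_natDegree_lt]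
    · have := elp_natDegree_le α e; omega
    · have := loc_natDegree_le (pt w α e); omega

/-- Since `αⁿ = 1`, an exponent may be reduced modulo `n`. -/
lemma pow_val_cast {n : ℕ} {β : K} (hβ : β ^ n = 1) (i : ℕ) :
    β ^ ((i : ZMod n).val) = β ^ i := by
  rw [ZMod.val_natCast]
  exact (pow_eq_pow_mod i hβ).symm

lemma pow_pow_eq_one {n : ℕ} {α : K} (hα : α ^ n = 1) (j : ℕ) : (α ^ j) ^ n = 1 := by
  rw [← pow_mul, mul_comm, pow_mul, hα, one_pow]

lemma ft_binary {n : ℕ} [NeZero n] {α : K} (hα : α ^ n = 1) {e : ZMod n → K} (he : isBinary e)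
    (i : ℕ) : ft α e (i : ZMod n) = ∑ j ∈ supp e, (α ^ j.val) ^ i := by
  rw [supp, Finset.sum_filter]
  refine Finset.sum_congr rfl fun j _ => ?_
  have : α ^ ((i : ZMod n).val * j.val) = (α ^ j.val) ^ i := by
    rw [mul_comm, pow_mul, pow_val_cast (pow_pow_eq_one hα _)]
  rw [this]
  rcases he j with h | h <;> simp [h]

/-- The Newton identities for a binary word of weight `w`: the identity `S·σ = -Zσ'` for the
generating series `S = ∑ⱼ XⱼZ / (1 - XⱼZ)` of the power sums and the product
`σ = ∏ⱼ (1 - XⱼZ)`. -/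
lemma newton_pt {n : ℕ} [NeZero n] {w : ℕ} {α : K} (hα : α ^ n = 1) {e : ZMod n → K}
    (he : isBinary e) (hwe : wt e = w) :
    syn (pt w α e) * (loc (pt w α e) : PowerSeries K) +
      ((Polynomial.X * Polynomial.derivative (loc (pt w α e)) : Polynomial K) : PowerSeries K)
      = 0 := by
  classical
  rw [loc_pt α e hwe]
  -- the part of the generating series coming from one position
  let G : ZMod n → PowerSeries K := fun j =>
    PowerSeries.mk fun i => if i = 0 then 0 else (α ^ j.val) ^ i
  have hsyn : syn (pt w α e) = ∑ j ∈ supp e, G j := by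
    ext i
    rw [syn, PowerSeries.coeff_mk, map_sum]
    split_ifs with h
    · simp [G, h]
    · simp only [pt, Sum.elim_inr, ft_binary hα he, G, PowerSeries.coeff_mk, if_neg h]
  have hG : ∀ j, G j * ((1 + Polynomial.C (α ^ j.val) * Polynomial.X : Polynomial K) :
      PowerSeries K) = ((Polynomial.C (α ^ j.val) * Polynomial.X : Polynomial K) :
      PowerSeries K) := by
    intro j
    ext i
    simp only [Polynomial.coe_add, Polynomial.coe_one, Polynomial.coe_mul, Polynomial.coe_C,
      Polynomial.coe_X]
    rw [mul_add, mul_one, mul_comm (PowerSeries.C _), ← mul_assoc, map_add,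
      PowerSeries.coeff_mul_C, PowerSeries.coeff_mul_C]
    rcases i with _ | _ | i
    · simp [G]
    · simp [G, PowerSeries.coeff_succ_mul_X]
    · simp only [PowerSeries.coeff_succ_mul_X, G, PowerSeries.coeff_mk]
      rw [PowerSeries.coeff_X, if_neg (by omega), if_neg (by omega), if_neg (by omega),
        pow_succ _ (i + 1), zero_mul, CharTwo.add_self_eq_zero]
  have hder : ((Polynomial.X * Polynomial.derivative (elp α e) : Polynomial K) : PowerSeries K)
      = ∑ j ∈ supp e, G j * ((elp α e : Polynomial K) : PowerSeries K) := by
    rw [elp, Polynomial.derivative_prod_finset, Finset.mul_sum,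
      ← Polynomial.coeToPowerSeries.ringHom_apply, map_sum]
    refine Finset.sum_congr rfl fun j hj => ?_
    rw [Polynomial.coeToPowerSeries.ringHom_apply, ← Finset.mul_prod_erase _ _ hj,
      Polynomial.coe_mul (1 + _), ← mul_assoc (G j), hG, ← Polynomial.coe_mul]
    congr 1
    simp only [Polynomial.derivative_add, Polynomial.derivative_one,
      Polynomial.derivative_C_mul, Polynomial.derivative_X]
    ring
  rw [hder, hsyn, Finset.sum_mul]
  ext i
  rw [map_add, CharTwo.add_self_eq_zero, map_zero]

/-- The coordinates of the point of a word lie in `F_{2^m}`. -/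
lemma pt_pow {n m w : ℕ} [NeZero n] {α : K} (hdvd : n ∣ 2 ^ m - 1) (hα : α ^ n = 1)
    {e : ZMod n → K} (he : isBinary e) (v : Fin w ⊕ ZMod n) :
    pt w α e v ^ (2 ^ m) = pt w α e v := by
  have hfr : ∀ x, iterateFrobenius K 2 m x = x ^ 2 ^ m := fun x => iterateFrobenius_def 2 m x
  have hφα : iterateFrobenius K 2 m α = α := by
    obtain ⟨c, hc⟩ := hdvd
    have : 2 ^ m = n * c + 1 := by
      have := Nat.one_le_two_pow (n := m); omega
    rw [hfr, this, pow_succ, pow_mul, hα, one_pow, one_mul]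
  rw [← hfr]
  rcases v with k | i
  · have : (elp α e).map (iterateFrobenius K 2 m) = elp α e := by
      simp only [elp, Polynomial.map_prod, Polynomial.map_add, Polynomial.map_one,
        Polynomial.map_mul, Polynomial.map_C, Polynomial.map_X]
      simp only [map_pow, hφα]
    change iterateFrobenius K 2 m ((elp α e).coeff _) = (elp α e).coeff _
    rw [← Polynomial.coeff_map, this]
  · change iterateFrobenius K 2 m (ft α e i) = ft α e i
    rw [ft, map_sum]
    refine Finset.sum_congr rfl fun j _ => ?_
    rw [map_mul, map_pow, hφα]
    rcases he j with h | h <;> simp [h]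

/-- The point of a binary word of weight `w` is a zero of the ideal `I⁰_{N,w}`. -/
lemma pt_mem {n m w : ℕ} [NeZero n] {α : K} (hdvd : n ∣ 2 ^ m - 1) (hα : α ^ n = 1)
    {e : ZMod n → K} (he : isBinary e) (hwe : wt e = w) :
    newtonIdeal0 n m w ≤ RingHom.ker (aeval (R := F2) (pt w α e)) := by
  refine sup_le (Ideal.span_le.2 ?_) (Ideal.span_le.2 ?_)
  · rintro _ ⟨i, hi, rfl⟩
    rw [SetLike.mem_coe, RingHom.mem_ker, aeval_newtonPoly_s6 _ hi.1, newton_pt hα he hwe, map_zero]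
  · rintro _ ⟨v, rfl⟩
    rw [SetLike.mem_coe, RingHom.mem_ker]
    simp only [map_add, map_pow, aeval_X]
    rw [pt_pow hdvd hα he, CharTwo.add_self_eq_zero]

/-! ### Uniqueness of the locator polynomial -/

lemma natCast_of_odd_s6 {k : ℕ} (hk : Odd k) : (k : K) = 1 := by
  obtain ⟨c, rfl⟩ := hk
  have h2 : (2 : K) = 0 := CharTwo.two_eq_zero
  push_cast
  rw [h2, zero_mul, zero_add]

lemma natCast_binary (k : ℕ) : (k : K) = 0 ∨ (k : K) = 1 := by
  rcases Nat.even_or_odd k with h | h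
  · obtain ⟨c, rfl⟩ := h
    left
    push_cast
    exact CharTwo.add_self_eq_zero _
  · exact Or.inr (natCast_of_odd_s6 h)

lemma sum_range_eq_sum_zmod {n : ℕ} [NeZero n] (F : ℕ → K) :
    ∑ k ∈ Finset.range n, F k = ∑ k : ZMod n, F k.val := by
  symm
  refine Finset.sum_bij (fun k _ => k.val) ?_ ?_ ?_ ?_
  · intro k _; exact Finset.mem_range.2 (ZMod.val_lt k)
  · intro a _ b _ h; exact ZMod.val_injective n h
  · intro b hb
    exact ⟨(b : ZMod n), Finset.mem_univ _, ZMod.val_cast_of_lt (Finset.mem_range.1 hb)⟩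
  · intro a _; rfl

/-- The polynomial `T = ∑_{i=1}^{n} S_i Zⁱ`, equal to `(1 - Zⁿ) S`. -/
noncomputable def synPoly {n w : ℕ} (g : Fin w ⊕ ZMod n → K) : Polynomial K :=
  ∑ k ∈ Finset.range n,
    Polynomial.C (g (Sum.inr ((k + 1 : ℕ) : ZMod n))) * Polynomial.X ^ (k + 1)

lemma synPoly_coeff {n w : ℕ} (g : Fin w ⊕ ZMod n → K) (i : ℕ) :
    (synPoly g).coeff i = if i = 0 then 0 else if i ≤ n then g (Sum.inr (i : ZMod n)) else 0 := by
  simp only [synPoly, Polynomial.finsetSum_coeff, Polynomial.coeff_C_mul, Polynomial.coeff_X_pow]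
  rcases i with _ | i
  · simp
  · rw [if_neg (by omega)]
    split_ifs with h
    · rw [Finset.sum_eq_single i]
      · simp
      · intro b _ hb
        rw [if_neg (by omega), mul_zero]
      · intro hi
        exact absurd (Finset.mem_range.2 (by omega)) hi
    · refine Finset.sum_eq_zero fun b hb => ?_
      rw [Finset.mem_range] at hb
      rw [if_neg (by omega), mul_zero]

lemma synPoly_natDegree_le {n w : ℕ} (g : Fin w ⊕ ZMod n → K) : (synPoly g).natDegree ≤ n := by
  rw [Polynomial.natDegree_le_iff_coeff_eq_zero]
  intro i hi
  rw [synPoly_coeff, if_neg (by omega), if_neg (by omega)]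

lemma coe_synPoly {n w : ℕ} [NeZero n] (g : Fin w ⊕ ZMod n → K) :
    (synPoly g : PowerSeries K) =
      syn g * ((1 + Polynomial.X ^ n : Polynomial K) : PowerSeries K) := by
  have hn : n ≠ 0 := NeZero.ne n
  ext i
  simp only [Polynomial.coe_add, Polynomial.coe_one, Polynomial.coe_pow, Polynomial.coe_X]
  rw [mul_add, mul_one, map_add, PowerSeries.coeff_mul_X_pow', Polynomial.coeff_coe, synPoly_coeff]
  simp only [syn, PowerSeries.coeff_mk]
  rcases Nat.lt_trichotomy i n with h | rfl | h
  · rw [if_neg (by omega : ¬ n ≤ i)]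
    have hle : i ≤ n := h.le
    simp [hle]
  · simp [hn]
  · rw [if_neg (by omega : ¬ i = 0), if_neg (by omega : ¬ i ≤ n), if_pos h.le,
      if_neg (by omega : ¬ i = 0), if_neg (by omega : ¬ i - n = 0)]
    have : ((i - n : ℕ) : ZMod n) = (i : ZMod n) := by
      rw [Nat.cast_sub h.le, ZMod.natCast_self, sub_zero]
    rw [this, CharTwo.add_self_eq_zero]

/-- At a zero of the Newton ideal the key equation `T·σ = -Z·σ'·(1 - Zⁿ)` holds: it holds for
coefficients up to `n + w` by the Newton identities, and both sides have degree at most `n + w`. -/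
lemma key_equation {n w : ℕ} [NeZero n] (g : Fin w ⊕ ZMod n → K)
    (hg : ∀ i, 1 ≤ i → i ≤ n + w → aeval g (newtonPoly n w i) = 0) :
    synPoly g * loc g +
      Polynomial.X * Polynomial.derivative (loc g) * (1 + Polynomial.X ^ n) = 0 := by
  have hdeg : (synPoly g * loc g +
      Polynomial.X * Polynomial.derivative (loc g) * (1 + Polynomial.X ^ n)).natDegree ≤ n + w := by
    have h1 := synPoly_natDegree_le g
    have h2 := loc_natDegree_le g
    have h3 : (Polynomial.X * Polynomial.derivative (loc g)).natDegree ≤ w := by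
      rw [Polynomial.natDegree_le_iff_coeff_eq_zero]
      rintro (_ | i) hi
      · omega
      · rw [Polynomial.coeff_X_mul, Polynomial.coeff_derivative,
          Polynomial.coeff_eq_zero_of_natDegree_lt (by omega), zero_mul]
    have h4 : (1 + Polynomial.X ^ n : Polynomial K).natDegree ≤ n := by compute_degree
    refine (Polynomial.natDegree_add_le _ _).trans (max_le ?_ ?_)
    · exact Polynomial.natDegree_mul_le.trans (by omega)
    · exact Polynomial.natDegree_mul_le.trans (by omega)
  have hser : ((synPoly g * loc g + Polynomial.X * Polynomial.derivative (loc g) *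
      (1 + Polynomial.X ^ n) : Polynomial K) : PowerSeries K) = (syn g * (loc g : PowerSeries K)
      + ((Polynomial.X * Polynomial.derivative (loc g) : Polynomial K) : PowerSeries K)) *
      ((1 + Polynomial.X ^ n : Polynomial K) : PowerSeries K) := by
    rw [Polynomial.coe_add, Polynomial.coe_mul, coe_synPoly,
      Polynomial.coe_mul (Polynomial.X * Polynomial.derivative (loc g))]
    ring
  ext i
  rw [Polynomial.coeff_zero]
  by_cases hi : i ≤ n + w
  · rw [← Polynomial.coeff_coe, hser, PowerSeries.coeff_mul]
    refine Finset.sum_eq_zero fun p hp => ?_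
    rw [Finset.HasAntidiagonal.mem_antidiagonal] at hp
    rcases Nat.eq_zero_or_pos p.1 with h0 | h0
    · rw [h0]
      simp [syn]
    · rw [← aeval_newtonPoly_s6 g h0, hg _ h0 (by omega), zero_mul]
  · exact Polynomial.coeff_eq_zero_of_natDegree_lt (by omega)

/-- The `j`-th inverse Fourier coefficient of a point. -/
noncomputable def wd {n w : ℕ} (α : K) (g : Fin w ⊕ ZMod n → K) (j : ZMod n) : K :=
  (synPoly g).eval (α ^ j.val)⁻¹

/-- At an `n`-th root of unity `y`, comparing the multiplicity `μ` of the factor `Z - y` in the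
key equation gives `T(y) = μ` in characteristic two. -/
lemma eval_synPoly {n w : ℕ} [NeZero n] (hodd : Odd n) (g : Fin w ⊕ ZMod n → K)
    (hg : ∀ i, 1 ≤ i → i ≤ n + w → aeval g (newtonPoly n w i) = 0) {y : K} (hy : y ^ n = 1) :
    (synPoly g).eval y = ((loc g).rootMultiplicity y : K) := by
  have hkey := key_equation g hg
  have hne : loc g ≠ 0 := fun h => by
    have := loc_coeff_zero g
    rw [h] at this
    simp at this
  obtain ⟨q, hq, hqd⟩ := Polynomial.exists_eq_pow_rootMultiplicity_mul_and_not_dvd _ hne y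
  have hqy : q.eval y ≠ 0 := fun h => hqd (Polynomial.dvd_iff_isRoot.2 h)
  set μ := (loc g).rootMultiplicity y with hμ
  have hnK := natCast_of_odd_s6 hodd
  obtain ⟨h, hh⟩ : Polynomial.X - Polynomial.C y ∣ (1 + Polynomial.X ^ n : Polynomial K) := by
    rw [Polynomial.dvd_iff_isRoot, Polynomial.IsRoot.def]
    simp [hy, CharTwo.add_self_eq_zero]
  -- differentiating `1 + Zⁿ = (Z - y) h` at `y` computes `y h(y) = n = 1`
  have hhy : y * h.eval y = 1 := by
    have := congrArg (fun p => y * (Polynomial.derivative p).eval y) hh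
    simp only [Polynomial.derivative_add, Polynomial.derivative_mul, Polynomial.derivative_one,
      Polynomial.derivative_X_pow, Polynomial.eval_add, Polynomial.eval_mul,
      Polynomial.derivative_sub, Polynomial.derivative_X, Polynomial.derivative_C,
      Polynomial.eval_sub, Polynomial.eval_X, Polynomial.eval_C, Polynomial.eval_one,
      Polynomial.eval_pow, Polynomial.eval_zero, hnK] at this
    have h2 : y * y ^ (n - 1) = 1 := by
      rw [← pow_succ', Nat.sub_add_cancel (Nat.one_le_iff_ne_zero.2 (NeZero.ne n)), hy]
    linear_combination -this + h2
  have hXy : (Polynomial.X - Polynomial.C y : Polynomial K) ≠ 0 := Polynomial.X_sub_C_ne_zero y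
  have hder : (Polynomial.X - Polynomial.C y) * Polynomial.derivative (loc g) =
      (Polynomial.X - Polynomial.C y) ^ μ * ((μ : Polynomial K) * q +
        (Polynomial.X - Polynomial.C y) * Polynomial.derivative q) := by
    rw [hq, Polynomial.derivative_mul, Polynomial.derivative_pow]
    rcases μ with _ | μ
    · simp
    · simp only [Polynomial.derivative_sub, Polynomial.derivative_X, Polynomial.derivative_C,
        Nat.add_sub_cancel, sub_zero, mul_one, Polynomial.C_eq_natCast]
      ring
  have hcancel : synPoly g * q + Polynomial.X * h * ((μ : Polynomial K) * q +
      (Polynomial.X - Polynomial.C y) * Polynomial.derivative q) = 0 := by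
    refine (mul_eq_zero.1 (?_ : (Polynomial.X - Polynomial.C y) ^ μ * _ = 0)).resolve_left
      (pow_ne_zero _ hXy)
    rw [hh] at hkey
    linear_combination hkey - synPoly g * hq - Polynomial.X * h * hder
  have hev := congrArg (Polynomial.eval y) hcancel
  simp only [Polynomial.eval_add, Polynomial.eval_mul, Polynomial.eval_X, Polynomial.eval_sub,
    Polynomial.eval_C, Polynomial.eval_natCast, Polynomial.eval_zero, sub_self, zero_mul,
    add_zero] at hev
  have : ((synPoly g).eval y + μ) * q.eval y = 0 := by
    linear_combination hev - (μ : K) * q.eval y * hhy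
  exact CharTwo.add_eq_zero.1 ((mul_eq_zero.1 this).resolve_right hqy)

/-- Fourier inversion: in characteristic two and for odd `n` the factor `1/n` is `1`. -/
lemma ft_wd {n w : ℕ} [NeZero n] (hodd : Odd n) {α : K} (hα : IsPrimitiveRoot α n)
    (g : Fin w ⊕ ZMod n → K) (i : ZMod n) : ft α (wd α g) i = g (Sum.inr i) := by
  have hα1 := hα.pow_eq_one
  have hα0 : α ≠ 0 := hα.ne_zero (NeZero.ne n)
  have hnK := natCast_of_odd_s6 hodd
  have hwd : ∀ j, wd α g j = ∑ k : ZMod n, g (Sum.inr k) * ((α ^ j.val)⁻¹) ^ k.val := by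
    intro j
    set y := (α ^ j.val)⁻¹ with hy
    have hyn : y ^ n = 1 := by rw [hy, inv_pow, pow_pow_eq_one hα1, inv_one]
    let F : ℕ → K := fun k => g (Sum.inr (k : ZMod n)) * y ^ k
    have h1 : wd α g j = ∑ k ∈ Finset.range n, F (k + 1) := by
      rw [wd, synPoly, Polynomial.eval_finsetSum]
      refine Finset.sum_congr rfl fun k _ => ?_
      simp [F, hy]
    have h2 : ∑ k ∈ Finset.range n, F (k + 1) = ∑ k ∈ Finset.range n, F k := by
      have := (Finset.sum_range_succ' F n).symm.trans (Finset.sum_range_succ F n)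
      have h0 : F n = F 0 := by simp [F, hyn]
      rw [h0] at this
      exact add_right_cancel this
    rw [h1, h2, sum_range_eq_sum_zmod]
    refine Finset.sum_congr rfl fun k _ => ?_
    simp [F]
  -- orthogonality of the characters of `ℤ/n`
  have horth : ∀ k : ZMod n, ∑ j : ZMod n, ((α ^ j.val)⁻¹) ^ k.val * α ^ (i.val * j.val) =
      if k = i then 1 else 0 := by
    intro k
    set ζ := α ^ i.val * (α ^ k.val)⁻¹ with hζ
    have h1 : ∑ j : ZMod n, ((α ^ j.val)⁻¹) ^ k.val * α ^ (i.val * j.val) =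
        ∑ j ∈ Finset.range n, ζ ^ j := by
      rw [sum_range_eq_sum_zmod]
      refine Finset.sum_congr rfl fun j _ => ?_
      rw [hζ, mul_pow, inv_pow, inv_pow, ← pow_mul, ← pow_mul, ← pow_mul, mul_comm k.val]
      ring
    rw [h1]
    split_ifs with h
    · have : ζ = 1 := by rw [hζ, h, mul_inv_cancel₀ (pow_ne_zero _ hα0)]
      simp [this, hnK]
    · have hζ1 : ζ ≠ 1 := fun h' => h <| by
        rw [hζ, mul_inv_eq_one₀ (pow_ne_zero _ hα0)] at h'
        exact ZMod.val_injective n (hα.pow_inj (ZMod.val_lt i) (ZMod.val_lt k) h').symm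
      have hζn : ζ ^ n = 1 := by
        rw [hζ, mul_pow, inv_pow, pow_pow_eq_one hα1, pow_pow_eq_one hα1, inv_one, one_mul]
      have := mul_geom_sum ζ n
      rw [hζn, sub_self] at this
      exact (mul_eq_zero.1 this).resolve_left (sub_ne_zero.2 hζ1)
  simp only [ft, hwd, Finset.sum_mul]
  rw [Finset.sum_comm]
  simp only [mul_assoc, ← Finset.mul_sum, horth]
  simp

/-- Zeros of the Newton ideal whose syndromes on `Q` are those of a correctable word `e` have the
`σ`-coordinates of `e`. -/
lemma unique_sigma {n w : ℕ} [NeZero n] (hodd : Odd n)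
    {α : K} (hα : IsPrimitiveRoot α n) {Q : Set (ZMod n)} {d : ℕ}
    (hd : ∀ c : ZMod n → K, isBinary c → (∀ i ∈ Q, ft α c i = 0) → c ≠ 0 → d ≤ wt c)
    (hwd : 2 * w < d) {e : ZMod n → K} (he : isBinary e) (hwe : wt e = w)
    (g : Fin w ⊕ ZMod n → K)
    (hg : ∀ i, 1 ≤ i → i ≤ n + w → aeval g (newtonPoly n w i) = 0)
    (hQ : ∀ i ∈ Q, g (Sum.inr i) = ft α e i) (k : Fin w) :
    g (Sum.inl k) = pt w α e (Sum.inl k) := by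
  classical
  have hα1 := hα.pow_eq_one
  have hα0 : α ≠ 0 := hα.ne_zero (NeZero.ne n)
  have hne : loc g ≠ 0 := fun h => by
    have := loc_coeff_zero g
    rw [h] at this
    simp at this
  set c := wd α g with hc
  let y : ZMod n → K := fun j => (α ^ j.val)⁻¹
  have hyn : ∀ j, y j ^ n = 1 := fun j => by
    simp only [y, inv_pow, pow_pow_eq_one hα1, inv_one]
  have hyinj : Function.Injective y := fun a b hab =>
    ZMod.val_injective n (hα.pow_inj (ZMod.val_lt a) (ZMod.val_lt b) (inv_injective hab))
  have hcm : ∀ j, c j = ((loc g).rootMultiplicity (y j) : K) := fun j =>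
    eval_synPoly hodd g hg (hyn j)
  have hcb : isBinary c := fun j => by rw [hcm]; exact natCast_binary _
  have hcroot : ∀ j ∈ supp c, (loc g).IsRoot (y j) := by
    intro j hj
    rw [mem_supp, hcm] at hj
    by_contra h
    rw [Polynomial.rootMultiplicity_eq_zero h] at hj
    simp at hj
  have hcw : wt c ≤ w := by
    rw [wt_eq, ← Finset.card_image_of_injective _ hyinj]
    refine le_trans ?_ ((Polynomial.card_roots' (loc g)).trans (loc_natDegree_le g))
    refine le_trans (Finset.card_le_card ?_) (Multiset.toFinset_card_le _)
    intro x hx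
    obtain ⟨j, hj, rfl⟩ := Finset.mem_image.1 hx
    rw [Multiset.mem_toFinset, Polynomial.mem_roots hne]
    exact hcroot j hj
  -- two words of weight at most `w` with the same syndromes differ by a codeword of weight `< d`
  have hce : c = e := by
    by_contra hcon
    have hle := hd (c + e) ?_ ?_ ?_
    · have : wt (c + e) ≤ wt c + wt e := by
        rw [wt_eq, wt_eq, wt_eq]
        refine (Finset.card_le_card ?_).trans (Finset.card_union_le _ _)
        intro j
        rw [Finset.mem_union, mem_supp, mem_supp, mem_supp]
        by_contra! h
        apply h.1
        simp [h.2.1, h.2.2]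
      omega
    · intro j
      rcases hcb j with h | h <;> rcases he j with h' | h' <;>
        simp [h, h', CharTwo.add_self_eq_zero]
    · intro i hi
      have : ft α (c + e) i = ft α c i + ft α e i := by
        simp only [ft, Pi.add_apply, add_mul, Finset.sum_add_distrib]
      rw [this, hc, ft_wd hodd hα, hQ i hi, CharTwo.add_self_eq_zero]
    · intro h
      apply hcon
      ext j
      exact CharTwo.add_eq_zero.1 (congrFun h j)
  -- the locators agree at the inverses of the `w` error locations and at `0`
  have hloc : loc g = elp α e := by
    refine sub_eq_zero.1 (Polynomial.eq_zero_of_natDegree_lt_card_of_eval_eq_zero' _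
      (insert 0 ((supp e).image y)) ?_ ?_)
    · intro x hx
      rw [Polynomial.eval_sub]
      rcases Finset.mem_insert.1 hx with rfl | hx
      · rw [← Polynomial.coeff_zero_eq_eval_zero, ← Polynomial.coeff_zero_eq_eval_zero,
          loc_coeff_zero, elp_coeff_zero, sub_self]
      · obtain ⟨j, hj, rfl⟩ := Finset.mem_image.1 hx
        have h1 : (loc g).eval (y j) = 0 := hcroot j (hce ▸ hj)
        have h2 : (elp α e).eval (y j) = 0 := by
          rw [elp, Polynomial.eval_prod]
          refine Finset.prod_eq_zero hj ?_
          simp only [Polynomial.eval_add, Polynomial.eval_one, Polynomial.eval_mul,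
            Polynomial.eval_C, Polynomial.eval_X, y]
          rw [mul_inv_cancel₀ (pow_ne_zero _ hα0), CharTwo.add_self_eq_zero]
        rw [h1, h2, sub_self]
    · rw [Finset.card_insert_of_notMem, Finset.card_image_of_injective _ hyinj, ← wt_eq, hwe]
      · have h1 := loc_natDegree_le g
        have h2 := elp_natDegree_le α e
        have := Polynomial.natDegree_sub_le (loc g) (elp α e)
        omega
      · intro h
        obtain ⟨j, _, hj⟩ := Finset.mem_image.1 h
        exact inv_ne_zero (pow_ne_zero _ hα0) hj
  rw [← loc_coeff_succ g k, hloc]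
  rfl

/-! ### From uniqueness of zeros to membership in the ideal -/

/-- Let `g` be a zero over `K` of an ideal `I` of `F₂[T]`, and suppose that all zeros of `I`
agreeing with `g` on the coordinates from `Q` have the same `v`-coordinate as `g`. Then `g v` is a
polynomial over `F₂` in the coordinates of `g` from `Q`: otherwise some automorphism of `K` fixes
these coordinates and moves `g v`, and the image of `g` is a zero of `I` violating the assumption.
-/
lemma exists_aeval_eq {T Q : Type*} (ι : Q → T) (I : Ideal (MvPolynomial T F2)) (g : T → K)
    (hgI : I ≤ RingHom.ker (aeval (R := F2) g)) (v : T)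
    (huniq : ∀ g' : T → K, I ≤ RingHom.ker (aeval (R := F2) g') → (∀ j, g' (ι j) = g (ι j)) →
      g' v = g v) :
    ∃ q : MvPolynomial Q F2, aeval (fun j => g (ι j)) q = g v := by
  let E := IntermediateField.adjoin F2 (Set.range fun j => g (ι j))
  have hmem : g v ∈ E := by
    rw [← InfiniteGalois.fixedField_fixingSubgroup E, IntermediateField.mem_fixedField_iff]
    intro τ hτ
    rw [IntermediateField.mem_fixingSubgroup_iff] at hτ
    refine huniq (fun u => τ (g u)) ?_ fun j => hτ _ ?_
    · intro p hp
      have h0 : aeval g p = 0 := hgI hp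
      rw [RingHom.mem_ker]
      have : aeval (fun u => τ (g u)) p = τ.toAlgHom (aeval g p) := by
        rw [← AlgHom.comp_apply, comp_aeval]
        rfl
      rw [this, h0, map_zero]
    · exact IntermediateField.subset_adjoin _ _ ⟨j, rfl⟩
  have hadj : g v ∈ E.toSubalgebra := hmem
  rw [IntermediateField.adjoin_toSubalgebra_of_isAlgebraic
    (fun x _ => Algebra.IsAlgebraic.isAlgebraic x), Algebra.adjoin_range_eq_range_aeval] at hadj
  exact hadj

/-- Homomorphisms into `K` extend along injections of domains `k → D` when `x ^ N = x` on `D`,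
since `D` is then algebraic over `k`. -/
lemma exists_extension {k D : Type*} [CommRing k] [IsDomain k] [CommRing D] [IsDomain D]
    (ψ : k →+* D) (χ : k →+* K) (hψ : Function.Injective ψ) (hχ : Function.Injective χ)
    {N : ℕ} (hN : 1 < N) (hD : ∀ x : D, x ^ N = x) :
    ∃ Φ : D →+* K, ∀ x, Φ (ψ x) = χ x := by
  let _ : Algebra k D := ψ.toAlgebra
  let _ : Algebra k K := χ.toAlgebra
  have : FaithfulSMul k D := (faithfulSMul_iff_algebraMap_injective k D).2 hψ
  have : FaithfulSMul k K := (faithfulSMul_iff_algebraMap_injective k K).2 hχ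
  have halg : Algebra.IsAlgebraic k D := by
    refine ⟨fun x => ⟨Polynomial.X ^ N - Polynomial.X, ?_, ?_⟩⟩
    · intro h
      have := congrArg (Polynomial.coeff · N) h
      simp [Polynomial.coeff_X, hN.ne] at this
    · rw [map_sub, map_pow, Polynomial.aeval_X, hD, sub_self]
  let Φ : D →ₐ[k] K := IsAlgClosed.lift
  exact ⟨Φ, Φ.commutes⟩

/-- Let `I` contain the field equations, and let `g` be a zero of `I` such that all zeros agreeing
with `g` on the coordinates from `Q` have the same `v`-coordinate. Then some `p X_v + q`, with `p`
and `q` in the variables from `Q` and `p` nonzero at `g`, lies in `I`.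

Choose `q` with `q(g) = g_v` and put `f = X_v + q`. If `p f ∉ I` for all `p` with `p(g) ≠ 0`, then
some prime `𝔭 ⊇ I` contains no `p f ^ k`. The quotient by `𝔭` maps to `K` so that the variables
from `Q` take the values they have at `g`; the images of all variables form a zero of `I`, so `f`
maps to `0` by uniqueness, although `f ∉ 𝔭`. -/
lemma exists_formula {T Q : Type*} (ι : Q → T) {m : ℕ} (hm : 0 < m) (I : Ideal (MvPolynomial T F2))
    (hI : ∀ v, X v ^ (2 ^ m) + X v ∈ I) (g : T → K)
    (hgI : I ≤ RingHom.ker (aeval (R := F2) g)) (v : T)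
    (huniq : ∀ g' : T → K, I ≤ RingHom.ker (aeval (R := F2) g') → (∀ j, g' (ι j) = g (ι j)) →
      g' v = g v) :
    ∃ p q : MvPolynomial Q F2, rename ι p * X v + rename ι q ∈ I ∧
      aeval (fun j => g (ι j)) p ≠ 0 := by
  obtain ⟨q, hq⟩ := exists_aeval_eq ι I g hgI v huniq
  have hN : 1 < 2 ^ m := Nat.one_lt_two_pow hm.ne'
  set s : Q → K := fun j => g (ι j) with hs
  -- every element of the quotient ring satisfies `x ^ (2 ^ m) = x`
  have hfrob : ∀ f : MvPolynomial T F2, f ^ (2 ^ m) - f ∈ I := by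
    intro f
    have hφ : ∀ x : MvPolynomial T F2, iterateFrobenius (MvPolynomial T F2) 2 m x = x ^ 2 ^ m :=
      fun x => iterateFrobenius_def 2 m x
    have : (Ideal.Quotient.mk I).comp (iterateFrobenius (MvPolynomial T F2) 2 m) =
        Ideal.Quotient.mk I := by
      refine MvPolynomial.ringHom_ext (fun r => ?_) fun u => ?_
      · rw [RingHom.comp_apply, hφ, ← map_pow]
        have hr : ∀ r : F2, r ^ 2 ^ m = r := fun r => ZMod.pow_card_pow r
        rw [hr]
      · rw [RingHom.comp_apply, hφ, Ideal.Quotient.eq, CharTwo.sub_eq_add]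
        exact hI u
    have h := RingHom.congr_fun this f
    rwa [RingHom.comp_apply, hφ, Ideal.Quotient.eq] at h
  set f : MvPolynomial T F2 := X v + rename ι q with hf
  let P : Ideal (MvPolynomial Q F2) := RingHom.ker (aeval (R := F2) s)
  have hP : P.IsPrime := RingHom.ker_isPrime _
  suffices ∃ p, p ∉ P ∧ rename ι p * f ∈ I by
    obtain ⟨p, hp, hpf⟩ := this
    refine ⟨p, p * q, ?_, hp⟩
    rwa [map_mul, ← mul_add]
  by_contra! hcon
  let M : Submonoid (MvPolynomial T F2) :=
    P.primeCompl.map (rename (R := F2) ι) ⊔ Submonoid.powers f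
  have hdisj : Disjoint (I : Set (MvPolynomial T F2)) M := by
    rw [Set.disjoint_left]
    intro x hxI hxM
    obtain ⟨a, ⟨p, hp, rfl⟩, b, ⟨k, rfl⟩, rfl⟩ := Submonoid.mem_sup.1 hxM
    refine hcon p hp ?_
    -- `f` is congruent modulo `I` to arbitrarily high powers of itself
    have hpow : ∀ l : ℕ, f ^ (2 ^ m) ^ l - f ∈ I := by
      intro l
      induction l with
      | zero => simp
      | succ l ih =>
        have h1 := hfrob (f ^ (2 ^ m) ^ l)
        rw [← pow_mul, ← pow_succ] at h1
        have := I.add_mem h1 ih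
        rwa [sub_add_sub_cancel] at this
    have hk : k ≤ (2 ^ m) ^ k := (Nat.lt_pow_self hN).le
    have h1 : rename ι p * f ^ (2 ^ m) ^ k ∈ I := by
      obtain ⟨l, hl⟩ := Nat.exists_eq_add_of_le hk
      rw [hl, pow_add, ← mul_assoc]
      exact I.mul_mem_right _ hxI
    have h2 := I.sub_mem h1 (I.mul_mem_left (rename ι p) (hpow k))
    rwa [← mul_sub, sub_sub_cancel] at h2
  obtain ⟨𝔭, h𝔭, hI𝔭, hdis⟩ := Ideal.exists_le_prime_disjoint I M hdisj
  rw [Set.disjoint_right] at hdis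
  have hf𝔭 : f ∉ 𝔭 := hdis (Submonoid.mem_sup_right (Submonoid.mem_powers f))
  have hPc : ∀ p, p ∉ P → rename ι p ∉ 𝔭 := fun p hp =>
    hdis (Submonoid.mem_sup_left ⟨p, hp, rfl⟩)
  -- `𝔭` lies over `P`: for `p ∈ P` not in `𝔭`, `1 - p ^ (2 ^ m - 1)` would be in `𝔭` but not in `P`
  have hP𝔭 : ∀ p ∈ P, rename ι p ∈ 𝔭 := by
    intro p hp
    by_contra hp𝔭
    have h1 : p ^ (2 ^ m - 1) - 1 ∉ P := fun h => by
      have h2 : p ^ (2 ^ m - 1) ∈ P := P.pow_mem_of_mem hp _ (by omega)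
      have h3 := P.sub_mem h2 h
      rw [sub_sub_cancel] at h3
      exact hP.ne_top (P.eq_top_iff_one.2 h3)
    have h2 := hI𝔭 (hfrob (rename ι p))
    have h3 : rename ι p * rename ι (p ^ (2 ^ m - 1) - 1) ∈ 𝔭 := by
      rw [map_sub, map_pow, map_one, mul_sub, mul_one, ← pow_succ',
        Nat.sub_add_cancel (by omega)]
      exact h2
    exact (h𝔭.mem_or_mem h3).elim hp𝔭 (hPc _ h1)
  let D := MvPolynomial T F2 ⧸ 𝔭
  let k := MvPolynomial Q F2 ⧸ P
  let ψ : k →+* D := Ideal.Quotient.lift P ((Ideal.Quotient.mk 𝔭).comp (rename ι).toRingHom)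
    fun p hp => Ideal.Quotient.eq_zero_iff_mem.2 (hP𝔭 p hp)
  let χ : k →+* K := Ideal.Quotient.lift P (aeval (R := F2) s).toRingHom fun p hp => hp
  have hψ : Function.Injective ψ := by
    rw [injective_iff_map_eq_zero]
    intro x
    obtain ⟨p, rfl⟩ := Ideal.Quotient.mk_surjective x
    intro h
    rw [Ideal.Quotient.eq_zero_iff_mem]
    by_contra hp
    exact hPc p hp (Ideal.Quotient.eq_zero_iff_mem.1 h)
  have hχ : Function.Injective χ := by
    rw [injective_iff_map_eq_zero]
    intro x
    obtain ⟨p, rfl⟩ := Ideal.Quotient.mk_surjective x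
    intro h
    exact Ideal.Quotient.eq_zero_iff_mem.2 h
  have hD : ∀ x : D, x ^ (2 ^ m) = x := by
    intro x
    obtain ⟨y, rfl⟩ := Ideal.Quotient.mk_surjective x
    rw [← map_pow, Ideal.Quotient.eq]
    exact hI𝔭 (hfrob y)
  obtain ⟨Φ, hΦ⟩ := exists_extension ψ χ hψ hχ hN hD
  let θ : MvPolynomial T F2 →+* K := Φ.comp (Ideal.Quotient.mk 𝔭)
  have hθ : ∀ p, aeval (fun u => θ (X u)) p = θ p := by
    intro p
    have : ((aeval (R := F2) fun u => θ (X u)) : MvPolynomial T F2 →+* K) = θ :=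
      MvPolynomial.ringHom_ext (fun r => RingHom.congr_fun (Subsingleton.elim
        ((((aeval (R := F2) fun u => θ (X u)) : MvPolynomial T F2 →+* K)).comp C) (θ.comp C)) r)
        fun u => by simp
    exact RingHom.congr_fun this p
  have hθr : ∀ p, θ (rename ι p) = aeval s p := fun p =>
    hΦ (Ideal.Quotient.mk P p)
  -- the zero of `I` given by `θ` has the prescribed coordinates at `Q`
  have hv : θ (X v) = g v := by
    refine huniq (fun u => θ (X u)) (fun p hp => ?_) fun j => ?_
    · rw [RingHom.mem_ker, hθ]
      have : Ideal.Quotient.mk 𝔭 p = 0 := Ideal.Quotient.eq_zero_iff_mem.2 (hI𝔭 hp)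
      rw [RingHom.comp_apply, this, map_zero]
    · have := hθr (X j)
      rwa [rename_X, aeval_X] at this
  have hθf : θ f = 0 := by
    rw [hf, map_add, hv, hθr, hq, CharTwo.add_self_eq_zero]
  -- but `f ^ (2 ^ m - 1)` is `1` modulo `𝔭`, so `θ f` is a unit
  have hunit : f ^ (2 ^ m - 1) - 1 ∈ 𝔭 := by
    refine (h𝔭.mem_or_mem (?_ : f * _ ∈ 𝔭)).resolve_left hf𝔭
    rw [mul_sub, mul_one, ← pow_succ', Nat.sub_add_cancel hN.le]
    exact hI𝔭 (hfrob f)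
  have h0 : θ (f ^ (2 ^ m - 1) - 1) = 0 := by
    have : Ideal.Quotient.mk 𝔭 (f ^ (2 ^ m - 1) - 1) = 0 := Ideal.Quotient.eq_zero_iff_mem.2 hunit
    rw [RingHom.comp_apply, this, map_zero]
  rw [map_sub, map_pow, hθf, map_one, zero_pow (by omega), zero_sub, neg_eq_zero] at h0
  exact one_ne_zero h0

/-- for every binary word `e` of weight `w` with `1 ≤ w ≤ t` and every
`i ∈ {1,…,w}`, there are polynomials `p_i, q_i ∈ F₂[S_Q]` with `p_i·σ_i + q_i ∈ I⁰_{N,w}`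
and `p_i(S_{Q,e}) ≠ 0`. (Here `i : Fin w` stands for `σ_{i+1}`.) -/
theorem exists_formula_in_newtonIdeal0 (n m w : ℕ) [NeZero n] (hodd : Odd n) (hm : 0 < m)
    (hdvd : n ∣ 2 ^ m - 1) (hw1 : 1 ≤ w) (hwn : w ≤ n)
    (α : K) (hα : IsPrimitiveRoot α n)
    (Q : Set (ZMod n)) (d t : ℕ)
    (hd : IsLeast {v : ℕ | ∃ c : ZMod n → K,
      isBinary c ∧ (∀ i ∈ Q, ft α c i = 0) ∧ c ≠ 0 ∧ wt c = v} d)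
    (ht : t = (d - 1) / 2)
    (hwt : w ≤ t)
    (e : ZMod n → K) (he : isBinary e) (hwe : wt e = w)
    (i : Fin w) :
    ∃ p q : MvPolynomial Q F2,
      MvPolynomial.rename (fun j : Q => (Sum.inr j.1 : Fin w ⊕ ZMod n)) p * X (Sum.inl i)
          + MvPolynomial.rename (fun j : Q => (Sum.inr j.1 : Fin w ⊕ ZMod n)) q
        ∈ newtonIdeal0 n m w ∧
      MvPolynomial.aeval (fun j : Q => ft α e j.1) p ≠ 0 := by
  refine exists_formula (fun j : Q => (Sum.inr j.1 : Fin w ⊕ ZMod n)) hm (newtonIdeal0 n m w)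
    (fun v => Ideal.mem_sup_right (Ideal.subset_span ⟨v, rfl⟩)) (pt w α e)
    (pt_mem hdvd hα.pow_eq_one he hwe) (Sum.inl i) fun g' hg' hQ => ?_
  refine unique_sigma hodd hα (d := d) (Q := Q)
    (fun c hc hcQ hc0 => hd.2 ⟨c, hc, hcQ, hc0, rfl⟩) (by omega) he hwe g' ?_
    (fun j hj => hQ ⟨j, hj⟩) i
  intro k hk1 hk2
  exact hg' (Ideal.mem_sup_left (Ideal.subset_span ⟨k, ⟨hk1, hk2⟩, rfl⟩))
end
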